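/- arXiv:1708.03250 — 2 statements merged into one kernel-verified Lean document; each statement's English description precedes it below -/
import Mathlib

section
/- For lattice polytopes P_1, ..., P_m in R^n with m > n, there exists a nonempty subset I of [m] with |I| ≤ n+1 such that the Minkowski sum P_I contains a lattice point in its relative interior. (Mixed version of Carathéodory's theorem.) -/
open scoped Pointwise
open MeasureTheory Finset

def IsLatticePt {n : ℕ} (x : Fin n → ℝ) : Prop := ∀ i, ∃ z : ℤ, x i = (z : ℝ)

def IsLatticePolytope {n : ℕ} (P : Set (Fin n → ℝ)) : Prop :=
  ∃ V : Finset (Fin n → ℝ), V.Nonempty ∧ (∀ v ∈ V, IsLatticePt v) ∧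
    P = convexHull ℝ (V : Set (Fin n → ℝ))

noncomputable def adim {n : ℕ} (A : Set (Fin n → ℝ)) : ℕ :=
  Module.finrank ℝ (affineSpan ℝ A).direction

def relintLat {n : ℕ} (A : Set (Fin n → ℝ)) : Set (Fin n → ℝ) :=
  {x ∈ intrinsicInterior ℝ A | IsLatticePt x}

def intLat {n : ℕ} (A : Set (Fin n → ℝ)) : Set (Fin n → ℝ) :=
  {x ∈ interior A | IsLatticePt x}

noncomputable def mixedVol {n m : ℕ} (P : Fin m → Set (Fin n → ℝ)) : ℝ :=
  ∑ I : Finset (Fin m), (-1 : ℝ) ^ (m - I.card) * (volume (∑ i ∈ I, P i)).toReal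

/-! A selection picks one generating point from the generating sets of some of the polytopes. The
sum of the picked points lies in the relative interior of the corresponding Minkowski sum as soon
as the normal cone of the selection is a linear subspace, because a functional that is maximal at
that sum is then constant on every selected polytope.

Suppose that the normal cone of no nonempty selection is a linear subspace. Perturb the polytopes by
heights `c`: a functional `u` belongs to the cell of a selection when each picked point is the only
maximizer of `u + c` on its polytope. Each cell is open and convex, and its recession cone is the
normal cone of the selection. As there are more than `dim E` polytopes, heights can be chosen such
that every `u` has a unique maximizer on at least one of them; attaching or removing that maximizer
cancels the selections whose cell contains `u` in pairs of opposite sign, so the nonempty selections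
have constant signed count `-1`. But a family of open convex sets whose recession cones are not
linear subspaces cannot have a nonzero constant signed count: this follows by induction on the
dimension, comparing the two ends of each line of a given direction.
-/

open scoped Topology

section Line

theorem eventually_nhdsLT_mem_iff {R : Type*} [LinearOrder R] [TopologicalSpace R]
    [OrderTopology R] [NoMinOrder R] {I : Set R} (ho : IsOpen I) (hc : I.OrdConnected) (s : R) :
    ∀ᶠ t in 𝓝[<] s, t ∈ I ↔ s ∈ I ∨ I.Nonempty ∧ IsLUB I s := by
  by_cases hs : s ∈ I
  · filter_upwards [nhdsWithin_le_nhds (ho.mem_nhds hs)] with t ht using by simp [ht, hs]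
  by_cases hub : s ∈ upperBounds I
  · by_cases hlub : I.Nonempty ∧ IsLUB I s
    · obtain ⟨x, hx⟩ := hlub.1
      have hxs : x < s := (hub hx).lt_of_ne (ne_of_mem_of_not_mem hx hs)
      filter_upwards [Ioo_mem_nhdsLT hxs] with t ht
      obtain ⟨y, hy, hty⟩ := (lt_isLUB_iff hlub.2).1 ht.2
      exact iff_of_true (hc.out hx hy ⟨ht.1.le, hty.le⟩) (Or.inr hlub)
    · have hgap : ∃ b < s, b ∈ upperBounds I := by
        by_contra! h
        obtain rfl | hne := I.eq_empty_or_nonempty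
        · obtain ⟨b, hb⟩ := exists_lt s
          exact h b hb (by simp)
        · exact hlub ⟨hne, hub, fun b hb => not_lt.1 fun hbs => h b hbs hb⟩
      obtain ⟨b, hbs, hb⟩ := hgap
      filter_upwards [Ioo_mem_nhdsLT hbs] with t ht
      exact iff_of_false (fun htI => (hb htI).not_gt ht.1) (not_or.2 ⟨hs, hlub⟩)
  · obtain ⟨x, hx, hsx⟩ : ∃ x ∈ I, s < x := by simpa [upperBounds] using hub
    filter_upwards [self_mem_nhdsWithin] with t ht
    exact iff_of_false (fun htI => hs (hc.out htI hx ⟨ht.le, hsx.le⟩))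
      (not_or.2 ⟨hs, fun h => hub h.2.1⟩)

variable {R A κ : Type*} [AddCommGroup A] {S : Finset κ} {a : κ → A} {I : κ → Set R} {c : A}

open Classical in
theorem sum_filter_not_bddBelow_eq [LinearOrder R] [Nonempty R] [NoMinOrder R]
    (hc : ∀ k ∈ S, (I k).OrdConnected)
    (hsum : ∀ t, ∑ k ∈ S with t ∈ I k, a k = c) :
    ∑ k ∈ S with ¬BddBelow (I k), a k = c := by
  have hbot : ∀ᶠ t in Filter.atBot, ∀ k ∈ S, t ∈ I k ↔ ¬BddBelow (I k) := by
    refine (Filter.eventually_all_finset S).2 fun k hk => ?_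
    by_cases hb : BddBelow (I k)
    · obtain ⟨x, hx⟩ := hb
      filter_upwards [Filter.eventually_lt_atBot x] with t ht
      exact iff_of_false (fun h => (hx h).not_gt ht) (not_not.2 ⟨x, hx⟩)
    · obtain ⟨x, hx, -⟩ := not_bddBelow_iff.1 hb (Classical.arbitrary R)
      filter_upwards [Filter.eventually_le_atBot x] with t ht
      obtain ⟨z, hz, hzt⟩ := not_bddBelow_iff.1 hb t
      exact iff_of_true ((hc k hk).out hz hx ⟨hzt.le, ht⟩) hb
  obtain ⟨t, ht⟩ := hbot.exists
  rw [← Finset.filter_congr ht, hsum t]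

variable [TopologicalSpace R]

open Classical in
theorem sum_filter_isLUB_eq_zero [LinearOrder R] [OrderTopology R] [DenselyOrdered R]
    [NoMinOrder R] [NoMaxOrder R] (ho : ∀ k ∈ S, IsOpen (I k))
    (hc : ∀ k ∈ S, (I k).OrdConnected) (hsum : ∀ t, ∑ k ∈ S with t ∈ I k, a k = c) (s : R) :
    ∑ k ∈ S with (I k).Nonempty ∧ IsLUB (I k) s, a k = 0 := by
  have hleft : ∀ᶠ t in 𝓝[<] s, ∀ k ∈ S, t ∈ I k ↔ s ∈ I k ∨ (I k).Nonempty ∧ IsLUB (I k) s :=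
    (Filter.eventually_all_finset S).2 fun k hk => eventually_nhdsLT_mem_iff (ho k hk) (hc k hk) s
  obtain ⟨t, ht⟩ := hleft.exists
  have hdisj : Disjoint {k ∈ S | s ∈ I k} {k ∈ S | (I k).Nonempty ∧ IsLUB (I k) s} := by
    refine Finset.disjoint_filter.2 fun k hk hs hlub => ?_
    obtain ⟨x, hx, hsx⟩ :=
      ((((ho k hk).eventually_mem hs).filter_mono nhdsWithin_le_nhds).and
        (self_mem_nhdsWithin : Set.Ioi s ∈ 𝓝[>] s)).exists
    exact (hlub.2.1 hx).not_gt hsx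
  have h := hsum t
  rw [Finset.filter_congr ht, Finset.filter_or, Finset.sum_union hdisj, hsum s] at h
  exact left_eq_add.1 h.symm

open Classical in
theorem sum_filter_bddAbove_eq_zero [ConditionallyCompleteLinearOrder R] [OrderTopology R]
    [DenselyOrdered R] [NoMinOrder R] [NoMaxOrder R] (ho : ∀ k ∈ S, IsOpen (I k))
    (hc : ∀ k ∈ S, (I k).OrdConnected) (hsum : ∀ t, ∑ k ∈ S with t ∈ I k, a k = c) :
    ∑ k ∈ S with (I k).Nonempty ∧ BddAbove (I k), a k = 0 := by
  rw [← Finset.sum_fiberwise_of_maps_to (g := fun k => sSup (I k))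
    fun k hk => Finset.mem_image_of_mem (fun k => sSup (I k)) hk]
  refine Finset.sum_eq_zero fun s _ => ?_
  rw [Finset.filter_filter, ← sum_filter_isLUB_eq_zero ho hc hsum s]
  refine Finset.sum_congr (Finset.filter_congr fun k _ => ⟨?_, ?_⟩) fun _ _ => rfl
  · rintro ⟨⟨hne, hb⟩, rfl⟩
    exact ⟨hne, isLUB_csSup hne hb⟩
  · rintro ⟨hne, hlub⟩
    exact ⟨⟨hne, hlub.bddAbove⟩, hlub.csSup_eq hne⟩

end Line

section Recession

variable {E : Type*} [AddCommGroup E] [Module ℝ E]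

/-- The recession cone of `s`: the directions in which `s` is closed under nonnegative translation.
For the open convex sets considered here it carries the asymptotic information that decides whether
lines meet `s` in bounded intervals, rays or lines. It is everything if `s` is empty. -/
def recessionCone (s : Set E) : Set E :=
  {v | ∀ x ∈ s, ∀ t : ℝ, 0 ≤ t → x + t • v ∈ s}

theorem recessionCone_image_subset {F : Type*} [AddCommGroup F] [Module ℝ F] (f : E →ₗ[ℝ] F)
    (s : Set E) : f '' recessionCone s ⊆ recessionCone (f '' s) := by
  rintro _ ⟨v, hv, rfl⟩ _ ⟨x, hx, rfl⟩ t ht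
  exact ⟨x + t • v, hv x hx t ht, by simp⟩

theorem ordConnected_preimage_line {s : Set E} (hc : Convex ℝ s) (x d : E) :
    ((fun t : ℝ => x + t • d) ⁻¹' s).OrdConnected := by
  have hline : ⇑(AffineMap.lineMap x (x + d) : ℝ →ᵃ[ℝ] E) = fun t => x + t • d := by
    ext t; simp [AffineMap.lineMap_apply, add_comm]
  exact hline ▸ (hc.affine_preimage _).ordConnected

theorem nonempty_preimage_line_iff (s : Set E) (x d : E) :
    ((fun t : ℝ => x + t • d) ⁻¹' s).Nonempty ↔ (ℝ ∙ d).mkQ x ∈ (ℝ ∙ d).mkQ '' s := by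
  constructor
  · rintro ⟨t, ht⟩
    exact ⟨_, ht, by simp [Submodule.mem_span_singleton_self]⟩
  · rintro ⟨y, hy, hxy⟩
    obtain ⟨t, ht⟩ := Submodule.mem_span_singleton.1 ((Submodule.Quotient.eq _).1 hxy)
    exact ⟨t, by simpa [ht] using hy⟩

variable [TopologicalSpace E] [IsTopologicalAddGroup E] [ContinuousSMul ℝ E] {s : Set E}

theorem isOpen_preimage_line (ho : IsOpen s) (x d : E) :
    IsOpen ((fun t : ℝ => x + t • d) ⁻¹' s) :=
  ho.preimage (by fun_prop)

open Filter in
theorem mem_recessionCone_of_ray_subset_closure (ho : IsOpen s) (hc : Convex ℝ s) {x v : E}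
    (hray : ∀ t : ℝ, 0 ≤ t → x + t • v ∈ closure s) : v ∈ recessionCone s := by
  -- `y + t • v` lies between a point slightly beyond `y`, seen from `x`, and a point of the ray.
  intro y hy t ht
  have hlim : Tendsto (fun r : ℝ => y + r • (y - x)) (𝓝[>] 0) (𝓝 y) :=
    (Continuous.tendsto' (by fun_prop) 0 y (by simp)).mono_left nhdsWithin_le_nhds
  obtain ⟨r, hr, hr0⟩ := ((hlim.eventually_mem (ho.mem_nhds hy)).and self_mem_nhdsWithin).exists
  replace hr0 : 0 < r := hr0
  have hmem := hc.combo_interior_closure_mem_interior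
    (ho.interior_eq.symm ▸ hr : y + r • (y - x) ∈ interior s)
    (hray (t * (1 + r) / r) (by positivity)) (a := 1 / (1 + r)) (b := r / (1 + r))
    (by positivity) (by positivity) (by field_simp)
  rw [ho.interior_eq] at hmem
  convert hmem using 1
  match_scalars <;> field_simp
  ring

theorem not_bddAbove_preimage_line_iff (ho : IsOpen s) (hc : Convex ℝ s) (x d : E) :
    ¬BddAbove ((fun t : ℝ => x + t • d) ⁻¹' s) ↔
      ((fun t : ℝ => x + t • d) ⁻¹' s).Nonempty ∧ d ∈ recessionCone s := by
  constructor
  · intro h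
    obtain ⟨t₀, ht₀, -⟩ := not_bddAbove_iff.1 h 0
    refine ⟨⟨t₀, ht₀⟩, mem_recessionCone_of_ray_subset_closure ho hc (x := x + t₀ • d)
      fun t ht => subset_closure ?_⟩
    obtain ⟨t₁, ht₁, hlt⟩ := not_bddAbove_iff.1 h (t₀ + t)
    have := (ordConnected_preimage_line hc x d).out ht₀ ht₁ ⟨le_add_of_nonneg_right ht, hlt.le⟩
    simpa [add_smul, add_assoc] using this
  · rintro ⟨⟨t₀, ht₀⟩, hd⟩
    refine not_bddAbove_iff.2 fun b => ⟨t₀ + (|b - t₀| + 1), ?_, ?_⟩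
    · simpa [add_smul, add_assoc] using hd _ ht₀ (|b - t₀| + 1) (by positivity)
    · linarith [le_abs_self (b - t₀)]

theorem not_bddBelow_preimage_line_iff (ho : IsOpen s) (hc : Convex ℝ s) (x d : E) :
    ¬BddBelow ((fun t : ℝ => x + t • d) ⁻¹' s) ↔
      ((fun t : ℝ => x + t • d) ⁻¹' s).Nonempty ∧ -d ∈ recessionCone s := by
  have hneg : (fun t : ℝ => x + t • -d) ⁻¹' s = -((fun t : ℝ => x + t • d) ⁻¹' s) := by
    ext t; simp
  rw [← bddAbove_neg, ← hneg, not_bddAbove_preimage_line_iff ho hc, hneg, Set.nonempty_neg]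

open Filter in
theorem mem_recessionCone_of_isBounded_preimage_line (ho : IsOpen s) (hc : Convex ℝ s) {x v d : E}
    (hx : x ∈ s) (hv : -v ∈ recessionCone s)
    (hbdd : Bornology.IsBounded ((fun r : ℝ => x + r • d) ⁻¹' s))
    (hshift : ∀ t : ℝ, 0 ≤ t → ∃ r : ℝ, x + t • v + r • d ∈ s) : v ∈ recessionCone s := by
  refine mem_recessionCone_of_ray_subset_closure ho hc (x := x) fun t ht => ?_
  -- `x + t • v` is the limit of points between `x` and the points of `s` on the lines
  -- `x + (n + 1) • t • v + ℝ • d`, which stay at bounded distance from `x + (n + 1) • t • v`.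
  choose r hr using fun n : ℕ => hshift ((n + 1) * t) (by positivity)
  obtain ⟨M, hM⟩ := hbdd.exists_norm_le
  have hrM : ∀ n, ‖r n‖ ≤ M := fun n => hM _ <| by
    have h := hv _ (hr n) ((n + 1) * t) (by positivity)
    rwa [show x + ((n + 1) * t) • v + r n • d + ((n + 1) * t) • -v = x + r n • d by module] at h
  have hlim : Tendsto (fun n : ℕ => x + t • v + (1 / ((n : ℝ) + 1) * r n) • d) atTop
      (𝓝 (x + t • v)) := by
    have h0 := tendsto_one_div_add_atTop_nhds_zero_nat (𝕜 := ℝ).zero_mul_isBoundedUnder_le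
      (isBoundedUnder_of ⟨M, hrM⟩)
    simpa using (h0.smul_const d).const_add (x + t • v)
  refine mem_closure_of_tendsto hlim (.of_forall fun n => ?_)
  convert hc hx (hr n) (a := 1 - 1 / ((n : ℝ) + 1)) (b := 1 / ((n : ℝ) + 1))
    (sub_nonneg.2 ((div_le_one (by positivity)).2 (by simp))) (by positivity) (by ring) using 1
  match_scalars <;> field_simp
  ring

theorem exists_mem_recessionCone_image_mkQ (ho : IsOpen s) (hc : Convex ℝ s)
    (hne : s.Nonempty) {d : E} (hd : d ∈ recessionCone s ↔ -d ∈ recessionCone s)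
    (h : ∃ v ∈ recessionCone s, -v ∉ recessionCone s) :
    ∃ v ∈ recessionCone ((ℝ ∙ d).mkQ '' s), -v ∉ recessionCone ((ℝ ∙ d).mkQ '' s) := by
  obtain ⟨v, hv, hnv⟩ := h
  refine ⟨(ℝ ∙ d).mkQ v, recessionCone_image_subset _ _ ⟨v, hv, rfl⟩, fun hπ => hnv ?_⟩
  obtain ⟨x, hx⟩ := hne
  have hshift : ∀ t : ℝ, 0 ≤ t → ∃ r : ℝ, x + t • -v + r • d ∈ s := fun t ht =>
    (nonempty_preimage_line_iff s _ d).2 (by simpa using hπ _ ⟨x, hx, rfl⟩ t ht)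
  by_cases hds : d ∈ recessionCone s
  · refine mem_recessionCone_of_ray_subset_closure ho hc (x := x) fun t ht => subset_closure ?_
    obtain ⟨r, hr⟩ := hshift t ht
    obtain hr0 | hr0 := le_total 0 r
    · simpa using hd.1 hds _ hr r hr0
    · simpa using hds _ hr (-r) (neg_nonneg.2 hr0)
  · refine mem_recessionCone_of_isBounded_preimage_line ho hc hx (by rwa [neg_neg]) ?_ hshift
    rw [isBounded_iff_bddBelow_bddAbove]
    exact ⟨not_not.1 fun h => hds (hd.2 ((not_bddBelow_preimage_line_iff ho hc x d).1 h).2),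
      not_not.1 fun h => hds ((not_bddAbove_preimage_line_iff ho hc x d).1 h).2⟩

end Recession

section Euler

variable {κ A : Type*} [AddCommGroup A] {E : Type*} [AddCommGroup E] [Module ℝ E]
  [TopologicalSpace E] [IsTopologicalAddGroup E] [ContinuousSMul ℝ E]
  {S : Finset κ} {a : κ → A} {Q : κ → Set E} {c : A}

open Classical in
theorem sum_filter_mkQ_image
    (ho : ∀ k ∈ S, IsOpen (Q k)) (hc : ∀ k ∈ S, Convex ℝ (Q k))
    (hsum : ∀ x, ∑ k ∈ S with x ∈ Q k, a k = c) (d : E) (y : E ⧸ (ℝ ∙ d)) :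
    ∑ k ∈ S with (d ∈ recessionCone (Q k) ↔ -d ∈ recessionCone (Q k)) ∧ y ∈ (ℝ ∙ d).mkQ '' Q k,
      (if d ∈ recessionCone (Q k) then a k else -a k) = c := by
  obtain ⟨x, rfl⟩ := (ℝ ∙ d).mkQ_surjective y
  have ho' : ∀ k ∈ S, IsOpen ((fun t : ℝ => x + t • d) ⁻¹' Q k) := fun k hk =>
    isOpen_preimage_line (ho k hk) x d
  have hc' : ∀ k ∈ S, ((fun t : ℝ => x + t • d) ⁻¹' Q k).OrdConnected := fun k hk =>
    ordConnected_preimage_line (hc k hk) x d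
  have hsum' (t : ℝ) : ∑ k ∈ S with t ∈ (fun t : ℝ => x + t • d) ⁻¹' Q k, a k = c :=
    hsum (x + t • d)
  rw [← sub_zero c]
  nth_rw 1 [← sum_filter_not_bddBelow_eq hc' hsum']
  rw [← sum_filter_bddAbove_eq_zero ho' hc' hsum']
  simp only [Finset.sum_filter, ← Finset.sum_sub_distrib]
  refine Finset.sum_congr rfl fun k hk => ?_
  have habove := (not_iff_comm.1 <| not_bddAbove_preimage_line_iff (ho k hk) (hc k hk) x d).symm
  have hbelow := (not_iff_comm.1 <| not_bddBelow_preimage_line_iff (ho k hk) (hc k hk) x d).symm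
  -- A line contributes `a k`, a nonempty bounded interval `-a k`, and rays cancel or do not count.
  simp only [habove, hbelow, nonempty_preimage_line_iff]
  generalize ((ℝ ∙ d).mkQ x ∈ (ℝ ∙ d).mkQ '' Q k) = p
  by_cases hp : p <;> by_cases hd : d ∈ recessionCone (Q k) <;>
    by_cases hd' : -d ∈ recessionCone (Q k) <;> simp [hp, hd, hd']

open Classical in
theorem eq_zero_of_sum_filter_mem_eq [FiniteDimensional ℝ E]
    (ho : ∀ k ∈ S, IsOpen (Q k)) (hc : ∀ k ∈ S, Convex ℝ (Q k))
    (hrec : ∀ k ∈ S, (Q k).Nonempty → ∃ v ∈ recessionCone (Q k), -v ∉ recessionCone (Q k))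
    (hsum : ∀ x, ∑ k ∈ S with x ∈ Q k, a k = c) : c = 0 := by
  induction hn : Module.finrank ℝ E generalizing E S a Q with
  | zero =>
    have := Module.finrank_zero_iff.1 hn
    rw [← hsum 0, Finset.filter_false_of_mem, Finset.sum_empty]
    intro k hk h0
    obtain ⟨v, hv, hnv⟩ := hrec k hk ⟨0, h0⟩
    exact hnv (Subsingleton.elim v (-v) ▸ hv)
  | succ n ih =>
    have : Nontrivial E := Module.nontrivial_of_finrank_pos (R := ℝ) (by lia)
    obtain ⟨d, hd⟩ := exists_ne (0 : E)
    have hn' : Module.finrank ℝ (E ⧸ (ℝ ∙ d)) = n := by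
      have := (ℝ ∙ d).finrank_quotient_add_finrank
      rw [finrank_span_singleton hd] at this
      lia
    refine ih (S := {k ∈ S | d ∈ recessionCone (Q k) ↔ -d ∈ recessionCone (Q k)})
      (a := fun k => if d ∈ recessionCone (Q k) then a k else -a k)
      (Q := fun k => (ℝ ∙ d).mkQ '' Q k) ?_ ?_ ?_ (fun y => ?_) hn'
    · exact fun k hk => (ℝ ∙ d).isOpenMap_mkQ _ (ho k (Finset.mem_filter.1 hk).1)
    · exact fun k hk => (hc k (Finset.mem_filter.1 hk).1).linear_image _
    · intro k hk hne
      obtain ⟨hkS, hiff⟩ := Finset.mem_filter.1 hk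
      have hne := Set.image_nonempty.1 hne
      exact exists_mem_recessionCone_image_mkQ (ho k hkS) (hc k hkS) hne hiff (hrec k hkS hne)
    · rw [Finset.filter_filter]
      exact sum_filter_mkQ_image ho hc hsum d y

end Euler

section GenericHeights

variable {K E ι : Type*} [Field K] [AddCommGroup E] [Module K E] [Module.Finite K E] [Fintype ι]

theorem exists_dual_eq_zero_of_forall_tie (h : Module.finrank K E < Fintype.card ι) {p q : ι → E}
    (hpq : ∀ i, p i ≠ q i) :
    ∃ φ : Module.Dual K (ι → E → K), (∃ c, φ c ≠ 0) ∧ ∀ (c) (u : Module.Dual K E),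
      (∀ i, u (p i) + c i (p i) = u (q i) + c i (q i)) → φ c = 0 := by
  classical
  have hdep : ¬LinearIndependent K fun i => p i - q i := fun hli =>
    hli.fintype_card_le_finrank.not_gt h
  -- A linear dependence among the differences `p i - q i` eliminates `u` from the ties.
  obtain ⟨g, hg, i, hi⟩ := Fintype.not_linearIndependent_iff.1 hdep
  let φ : Module.Dual K (ι → E → K) :=
    ∑ j, g j •
      (LinearMap.proj (R := K) (φ := fun _ : E => K) (p j) - LinearMap.proj (q j)) ∘ₗ
        LinearMap.proj (φ := fun _ : ι => E → K) j
  have hφ (c) : φ c = ∑ j, g j * (c j (p j) - c j (q j)) := by simp [φ]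
  refine ⟨φ, ⟨Pi.single i (Pi.single (p i) 1), ?_⟩, fun c u hu => ?_⟩
  · rw [hφ, Finset.sum_eq_single i (fun j _ hj => by simp [hj]) (by simp)]
    simpa [(hpq i).symm] using hi
  · calc φ c = ∑ j, g j * (u (q j) - u (p j)) := by
          rw [hφ]
          exact Finset.sum_congr rfl fun j _ => by linear_combination g j * hu j
      _ = -u (∑ j, g j • (p j - q j)) := by
          simp [mul_sub]
      _ = 0 := by rw [hg, map_zero, neg_zero]

theorem exists_heights_forall_dual_exists_injOn [Infinite K]
    (h : Module.finrank K E < Fintype.card ι) (V : ι → Finset E) :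
    ∃ c : ι → E → K, ∀ u : Module.Dual K E, ∃ i, Set.InjOn (fun w => u w + c i w) (V i) := by
  choose φ hφ₀ hφ using fun r : {r : ∀ i, V i × V i // ∀ i, ((r i).1 : E) ≠ (r i).2} =>
    exists_dual_eq_zero_of_forall_tie h r.2
  obtain ⟨c, hc⟩ := Module.Dual.exists_forall_ne_zero_of_forall_exists φ hφ₀
  refine ⟨c, fun u => ?_⟩
  by_contra! hu
  simp only [Set.InjOn, not_forall] at hu
  choose p hp q hq heq hne using hu
  exact hc ⟨fun i => (⟨p i, hp i⟩, ⟨q i, hq i⟩), hne⟩ (hφ _ c u heq)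

end GenericHeights

section Selection

variable {E ι : Type*} [NormedAddCommGroup E] [NormedSpace ℝ E]

/-- The region in dual space dominated by `w`: the functionals `u` for which `w` is the only
maximizer of `u + c` on `V`. These are the open cells of the piecewise linear subdivision of the
dual space induced by the heights `c`; `w` is not required to lie in `V`. -/
def dominanceCell (V : Finset E) (c : E → ℝ) (w : E) : Set (StrongDual ℝ E) :=
  {u | ∀ w' ∈ V, w' ≠ w → u w' + c w' < u w + c w}

theorem isOpen_dominanceCell (V : Finset E) (c : E → ℝ) (w : E) :
    IsOpen (dominanceCell V c w) := by
  simp only [dominanceCell, Set.ofPred_forall]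
  exact isOpen_biInter_finset fun w' _ => isOpen_iInter_of_finite fun _ =>
    isOpen_lt (by fun_prop) (by fun_prop)

theorem convex_dominanceCell (V : Finset E) (c : E → ℝ) (w : E) :
    Convex ℝ (dominanceCell V c w) := by
  have hcell : dominanceCell V c w =
      ⋂ w' ∈ V, ⋂ _ : w' ≠ w, {u : StrongDual ℝ E | u (w' - w) < c w - c w'} := by
    ext u
    simp only [dominanceCell, Set.mem_ofPred_eq, Set.mem_iInter, map_sub]
    exact forall₃_congr fun _ _ _ => ⟨fun h => by linarith, fun h => by linarith⟩
  rw [hcell]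
  exact convex_iInter₂ fun w' _ => convex_iInter fun _ => convex_halfSpace_lt
    ⟨fun _ _ => rfl, fun _ _ => rfl⟩ _

theorem exists_forall_mem_dominanceCell_iff {V : Finset E} (hV : V.Nonempty) {c : E → ℝ}
    {u : StrongDual ℝ E} (hinj : Set.InjOn (fun w => u w + c w) V) :
    ∃ w ∈ V, ∀ w' ∈ V, u ∈ dominanceCell V c w' ↔ w' = w := by
  obtain ⟨w, hw, hmax⟩ := V.exists_max_image (fun w => u w + c w) hV
  refine ⟨w, hw, fun w' hw' => ⟨fun hu => ?_, ?_⟩⟩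
  · by_contra hne
    exact (hu w hw (Ne.symm hne)).not_ge (hmax w' hw')
  · rintro rfl x hx hne
    exact (hmax x hx).lt_of_ne (hinj.ne hx hw hne)

/-- The cell of a selection `s` of points from some of the sets `V i`: the common part of the
dominance cells of the selected points. The value `none` encodes that nothing is selected from
`V i`, which imposes no condition. -/
def selectionCell (V : ι → Finset E) (c : ι → E → ℝ) (s : ι → Option E) : Set (StrongDual ℝ E) :=
  {u | ∀ i, ∀ w ∈ s i, u ∈ dominanceCell (V i) (c i) w}

variable {V : ι → Finset E} {c : ι → E → ℝ} {s : ι → Option E}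

theorem isOpen_selectionCell [Finite ι] : IsOpen (selectionCell V c s) := by
  simp only [selectionCell, Set.ofPred_forall]
  refine isOpen_iInter_of_finite fun i => ?_
  cases s i <;> simp [isOpen_dominanceCell]

theorem convex_selectionCell : Convex ℝ (selectionCell V c s) := by
  simp only [selectionCell, Set.ofPred_forall]
  exact convex_iInter fun i => convex_iInter₂ fun w _ => convex_dominanceCell _ _ _

theorem mem_recessionCone_selectionCell_iff (hne : (selectionCell V c s).Nonempty)
    {v : StrongDual ℝ E} :
    v ∈ recessionCone (selectionCell V c s) ↔ ∀ i, ∀ w ∈ s i, ∀ w' ∈ V i, v w' ≤ v w := by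
  constructor
  · intro hv i w hw w' hw'
    obtain ⟨u, hu⟩ := hne
    by_contra! hlt
    have hww' : w' ≠ w := by rintro rfl; exact hlt.false
    have hpos : 0 < v w' - v w := sub_pos.2 hlt
    have h₀ := hu i w hw w' hw' hww'
    have h := hv u hu ((u w + c i w - (u w' + c i w')) / (v w' - v w))
      (div_nonneg (sub_pos.2 h₀).le hpos.le) i w hw w' hw' hww'
    have hcancel := div_mul_cancel₀ (u w + c i w - (u w' + c i w')) hpos.ne'
    simp only [add_apply, smul_apply, smul_eq_mul] at h
    linarith
  · intro hv u hu t ht i w hw w' hw' hww'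
    have h₀ := hu i w hw w' hw' hww'
    have h := mul_le_mul_of_nonneg_left (hv i w hw w' hw') ht
    simp only [add_apply, smul_apply, smul_eq_mul]
    linarith

open Classical in
theorem sum_filter_mem_selectionCell_eq_zero [Fintype ι] {u : StrongDual ℝ E} {i : ι}
    (hV : (V i).Nonempty) (hinj : Set.InjOn (fun w => u w + c i w) (V i)) :
    ∑ s ∈ Fintype.piFinset fun i => insertNone (V i) with u ∈ selectionCell V c s,
      ∏ i, (if (s i).isSome then -1 else 1 : ℤ) = 0 := by
  have hpi : ({s ∈ Fintype.piFinset fun i => insertNone (V i) | u ∈ selectionCell V c s} :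
      Finset (ι → Option E)) =
      Fintype.piFinset fun i =>
        {o ∈ insertNone (V i) | ∀ w ∈ o, u ∈ dominanceCell (V i) (c i) w} := by
    ext s
    simp only [Finset.mem_filter, Fintype.mem_piFinset, forall_and]
    rfl
  rw [hpi, ← Finset.prod_univ_sum (f := fun _ (o : Option E) => if o.isSome then (-1 : ℤ) else 1)]
  refine Finset.prod_eq_zero (Finset.mem_univ i) ?_
  obtain ⟨w, hw, hcell⟩ := exists_forall_mem_dominanceCell_iff hV hinj
  rw [Finset.sum_filter, sum_insertNone,
    Finset.sum_eq_single w (fun w' hw' hne => by simp [hcell w' hw', hne]) (absurd hw)]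
  simp [hcell w hw]

theorem exists_selection_forall_eq [Fintype ι] [FiniteDimensional ℝ E]
    (h : Module.finrank ℝ E < Fintype.card ι) (hV : ∀ i, (V i).Nonempty) :
    ∃ s : ι → Option E, (∀ i, ∀ w ∈ s i, w ∈ V i) ∧ (∃ i, (s i).isSome) ∧
      ∀ u : StrongDual ℝ E, (∀ i, ∀ w ∈ s i, ∀ w' ∈ V i, u w' ≤ u w) →
        ∀ i, ∀ w ∈ s i, ∀ w' ∈ V i, u w' = u w := by
  classical
  by_contra! hne
  obtain ⟨c, hc⟩ := exists_heights_forall_dual_exists_injOn h V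
  refine neg_ne_zero.2 one_ne_zero <| eq_zero_of_sum_filter_mem_eq (c := (-1 : ℤ))
    (S := (Fintype.piFinset fun i => insertNone (V i)).erase fun _ => none)
    (a := fun s => ∏ i, if (s i).isSome then -1 else 1) (Q := selectionCell V c)
    (fun _ _ => isOpen_selectionCell) (fun _ _ => convex_selectionCell) (fun s hs hcell => ?_)
    fun u => ?_
  · simp only [Finset.mem_erase, Fintype.mem_piFinset, Function.ne_iff] at hs
    obtain ⟨v, hv, i, w, hw, w', hw', hvne⟩ := hne s
      (fun i w hw => Finset.mem_insertNone.1 (hs.2 i) w hw)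
      (by simpa [Option.isSome_iff_ne_none] using hs.1)
    refine ⟨v, (mem_recessionCone_selectionCell_iff hcell).2 hv, fun hneg => hvne ?_⟩
    have := (mem_recessionCone_selectionCell_iff hcell).1 hneg i w hw w' hw'
    exact (hv i w hw w' hw').antisymm (neg_le_neg_iff.1 this)
  · obtain ⟨i, hi⟩ := hc u
    rw [Finset.filter_erase, Finset.sum_erase_eq_sub (by simp [selectionCell]),
      sum_filter_mem_selectionCell_eq_zero (hV i) hi]
    simp

end Selection

section RelativeInterior

variable {E : Type*} [NormedAddCommGroup E] [NormedSpace ℝ E] [FiniteDimensional ℝ E]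
  {A : Set E} {x : E}

theorem mem_interior_of_forall_dual_eq (hA : Convex ℝ A) (hspan : affineSpan ℝ A = ⊤)
    (h : ∀ f : StrongDual ℝ E, (∀ y ∈ A, f y ≤ f x) → ∀ y ∈ A, f y = f x) : x ∈ interior A := by
  by_contra hx
  have hne : (interior A).Nonempty := hA.interior_nonempty_iff_affineSpan_eq_top.2 hspan
  obtain ⟨f, hf⟩ := geometric_hahn_banach_open_point hA.interior isOpen_interior hx
  have hle : ∀ y ∈ A, f y ≤ f x := fun y hy =>
    closure_minimal (fun z hz => (hf z hz).le) (isClosed_le f.continuous continuous_const) <|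
      hA.closure_interior_eq_closure_of_nonempty_interior hne ▸ subset_closure hy
  obtain ⟨z, hz⟩ := hne
  exact (hf z hz).ne (h f hle z (interior_subset hz))

theorem mem_intrinsicInterior_of_forall_dual_eq (hA : Convex ℝ A) (hx : x ∈ A)
    (h : ∀ f : StrongDual ℝ E, (∀ y ∈ A, f y ≤ f x) → ∀ y ∈ A, f y = f x) :
    x ∈ intrinsicInterior ℝ A := by
  have : Nonempty A := ⟨⟨x, hx⟩⟩
  let x' : affineSpan ℝ A := ⟨x, subset_affineSpan ℝ A hx⟩
  let e := AffineIsometryEquiv.vaddConst ℝ x'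
  let B : Set (affineSpan ℝ A).direction := e ⁻¹' ((↑) ⁻¹' A)
  have hB : Convex ℝ B :=
    hA.affine_preimage ((affineSpan ℝ A).subtype.comp e.toAffineEquiv.toAffineMap)
  have hspan : affineSpan ℝ B = ⊤ := by
    rw [← AffineSubspace.comap_top (f := e.toAffineEquiv.toAffineMap),
      ← affineSpan_coe_preimage_eq_top A]
    exact (AffineSubspace.comap_span e.toAffineEquiv _).symm
  have h0 : (0 : (affineSpan ℝ A).direction) ∈ interior B := by
    refine mem_interior_of_forall_dual_eq hB hspan fun f hf => ?_
    obtain ⟨g, hg, -⟩ := exists_extension_norm_eq _ f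
    have hgA : ∀ y ∈ A, g y ≤ g x := fun y hy => by
      let y' : affineSpan ℝ A := ⟨y, subset_affineSpan ℝ A hy⟩
      have hy' := hf (y' -ᵥ x') (by simpa [B, e] using hy)
      rwa [map_zero, ← hg, AffineSubspace.coe_vsub, vsub_eq_sub, map_sub, sub_nonpos] at hy'
    intro b hb
    simpa [hg] using h g hgA (b + x) hb
  have hpre : B = e.toHomeomorph ⁻¹' ((↑) ⁻¹' A) := rfl
  rw [hpre, ← e.toHomeomorph.preimage_interior] at h0
  exact ⟨x', by simpa [e] using h0, rfl⟩

end RelativeInterior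

section MinkowskiSum

theorem le_of_forall_mem_finsetSum_le {ι M N F : Type*} [AddCommMonoid M] [AddCommMonoid N]
    [PartialOrder N] [IsOrderedCancelAddMonoid N] [FunLike F M N] [AddMonoidHomClass F M N]
    {f : F} {J : Finset ι} {A : ι → Set M} {w : ι → M} (hw : ∀ i ∈ J, w i ∈ A i)
    (hf : ∀ y ∈ ∑ i ∈ J, A i, f y ≤ f (∑ i ∈ J, w i)) :
    ∀ i ∈ J, ∀ y ∈ A i, f y ≤ f (w i) := by
  classical
  intro i hi y hy
  have hmem : y + ∑ j ∈ J.erase i, w j ∈ ∑ j ∈ J, A j := by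
    rw [← Finset.add_sum_erase J A hi]
    exact Set.add_mem_add hy <|
      Set.finsetSum_mem_finsetSum _ _ _ fun j hj => hw j (Finset.mem_of_mem_erase hj)
  simpa [← Finset.add_sum_erase J w hi] using hf _ hmem

variable {E ι : Type*} [NormedAddCommGroup E] [NormedSpace ℝ E] [FiniteDimensional ℝ E]

theorem sum_mem_intrinsicInterior_sum_convexHull {J : Finset ι} {V : ι → Set E} {w : ι → E}
    (hw : ∀ i ∈ J, w i ∈ V i)
    (h : ∀ u : StrongDual ℝ E, (∀ i ∈ J, ∀ w' ∈ V i, u w' ≤ u (w i)) →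
      ∀ i ∈ J, ∀ w' ∈ V i, u w' = u (w i)) :
    ∑ i ∈ J, w i ∈ intrinsicInterior ℝ (∑ i ∈ J, convexHull ℝ (V i)) := by
  have hw' : ∀ i ∈ J, w i ∈ convexHull ℝ (V i) := fun i hi => subset_convexHull ℝ _ (hw i hi)
  refine mem_intrinsicInterior_of_forall_dual_eq (convex_sum _ fun i _ => convex_convexHull ℝ _)
    (Set.finsetSum_mem_finsetSum _ _ _ hw') fun f hf y hy => ?_
  have hmax := le_of_forall_mem_finsetSum_le hw' hf
  have hconst : ∀ i ∈ J, ∀ z ∈ convexHull ℝ (V i), f z = f (w i) := fun i hi =>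
    convexHull_min (h f (fun i hi z hz => hmax i hi z (subset_convexHull ℝ _ hz)) i hi)
      (convex_hyperplane f.isLinear _)
  obtain ⟨g, hg, rfl⟩ := (Set.mem_finsetSum _ _ _).1 hy
  rw [map_sum, map_sum]
  exact Finset.sum_congr rfl fun i hi => hconst i hi _ (hg hi)

theorem exists_sum_mem_intrinsicInterior_sum_convexHull [Fintype ι]
    (h : Module.finrank ℝ E < Fintype.card ι) {V : ι → Finset E} (hV : ∀ i, (V i).Nonempty) :
    ∃ (J : Finset ι) (w : ι → E), J.Nonempty ∧ (∀ i ∈ J, w i ∈ V i) ∧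
      ∑ i ∈ J, w i ∈ intrinsicInterior ℝ (∑ i ∈ J, convexHull ℝ (V i : Set E)) := by
  obtain ⟨s, hsV, ⟨i₀, hi₀⟩, hs⟩ := exists_selection_forall_eq h hV
  let J : Finset ι := {i | (s i).isSome}
  have hget {i : ι} (hi : i ∈ J) : (s i).getD 0 ∈ s i := by
    obtain ⟨w, hw⟩ := Option.isSome_iff_exists.1 (Finset.mem_filter.1 hi).2
    simp [hw]
  have hw : ∀ i ∈ J, (s i).getD 0 ∈ V i := fun i hi => hsV i _ (hget hi)
  refine ⟨J, fun i => (s i).getD 0, ⟨i₀, by simpa [J] using hi₀⟩, hw,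
    sum_mem_intrinsicInterior_sum_convexHull hw fun u hu i hi => hs u (fun j w hj => ?_) i _
      (hget hi)⟩
  rw [Option.mem_def] at hj
  simpa [hj] using hu j (by simp [J, hj])

end MinkowskiSum

/-- The lattice points of `ℝⁿ`, bundled as an additive submonoid in order to serve as the lattice of
the general theorem. -/
def latticePoints (n : ℕ) : AddSubmonoid (Fin n → ℝ) where
  carrier := {x | IsLatticePt x}
  zero_mem' _ := ⟨0, by simp⟩
  add_mem' hx hy i := by
    obtain ⟨a, ha⟩ := hx i
    obtain ⟨b, hb⟩ := hy i
    exact ⟨a + b, by simp [ha, hb]⟩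

theorem exists_small_subfamily_with_relint_lattice_point_general {ι E : Type*}
    [NormedAddCommGroup E] [NormedSpace ℝ E] [FiniteDimensional ℝ E] (Λ : AddSubmonoid E)
    (P : ι → Set E)
    (hP : ∀ i, ∃ V : Finset E, V.Nonempty ∧ (∀ v ∈ V, v ∈ Λ) ∧ P i = convexHull ℝ (V : Set E))
    (h : (Module.finrank ℝ E : ℕ∞) < ENat.card ι) :
    ∃ I : Finset ι, I.Nonempty ∧ I.card ≤ Module.finrank ℝ E + 1 ∧
      {x ∈ intrinsicInterior ℝ (∑ i ∈ I, P i) | x ∈ Λ}.Nonempty := by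
  choose V hV hΛ hPV using hP
  obtain ⟨T, hT⟩ : ∃ T : Finset ι, T.card = Module.finrank ℝ E + 1 := by
    obtain ⟨T, -, hT⟩ := Set.exists_subset_encard_eq
      ((Order.add_one_le_of_lt h).trans_eq (Set.encard_univ ι).symm)
    lift T to Finset ι using Set.finite_of_encard_eq_coe (k := Module.finrank ℝ E + 1) hT
    exact ⟨T, by exact_mod_cast hT⟩
  let e : T ↪ ι := Function.Embedding.subtype (· ∈ T)
  obtain ⟨J, w, hJ, hw, hmem⟩ := exists_sum_mem_intrinsicInterior_sum_convexHull
    (by simp [hT]) fun i => hV (e i)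
  refine ⟨J.map e, hJ.map, ?_, ∑ i ∈ J, w i, ?_, sum_mem fun i hi => hΛ _ _ (hw i hi)⟩
  · simpa [hT] using J.card_le_univ
  · simpa [hPV] using hmem

/-- mixed version of Carathéodory's theorem. -/
theorem exists_small_subfamily_with_relint_lattice_point {n m : ℕ}
    (P : Fin m → Set (Fin n → ℝ)) (hP : ∀ i, IsLatticePolytope (P i)) (hm : n < m) :
    ∃ I : Finset (Fin m), I.Nonempty ∧ I.card ≤ n + 1 ∧
      (relintLat (∑ i ∈ I, P i)).Nonempty := by
  have h := exists_small_subfamily_with_relint_lattice_point_general (latticePoints n) P hP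
    (by simpa using hm)
  rwa [Module.finrank_fin_fun] at h
end

section
/- Let P_1, ..., P_n be lattice polytopes in R^n. Then MV(P_1,...,P_n) ≥ 1 if and only if for every nonempty subset I of [n], the dimension of the Minkowski sum P_I is at least |I|. (Bernstein's criterion for positivity of the mixed volume.) -/
open scoped Pointwise
open MeasureTheory Finset

/-!
To a nonempty finite set `V` of points attach the Gibbs distributions on `V`, with weights
proportional to `exp (b v + v ⬝ᵥ x)`. Their barycenter, as a function of `x`, is the gradient of
the convex function `log ∑ exp (b v + v ⬝ᵥ x)`, and its derivative is the covariance matrix. For a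
family `V i` whose convex hulls have a full-dimensional Minkowski sum, the sum of these gradients
is a diffeomorphism onto the interior of that sum, whose volume is therefore the integral of the
determinant of the summed covariances. By polarization, the mixed volume is the integral of the
mixed discriminant of the covariances, which is a nonnegative combination of the squares
`det (v i - w i) ^ 2` with `v i, w i ∈ V i`.

If all these determinants vanish, the mixed volume is zero. Otherwise choose `v, w` with
`det (v i - w i) ≠ 0`: the mixed volume does not depend on the energies `b`, and sending them to
`-∞` off the pairs `{v i, w i}` shows by Fatou's lemma that it is at least the mixed volume of the
segments `[v i, w i]`, which is `|det (v i - w i)|`, a nonzero integer for lattice points. By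
Rado's theorem on independent transversals, such `v, w` exist exactly when the dimension condition
holds.
-/

section MixedDiscriminant

variable {ι R : Type*} [Fintype ι] [DecidableEq ι] [CommRing R]

theorem sum_neg_one_pow_card_compl_superset (S : Finset ι) :
    ∑ J with S ⊆ J, (-1 : R) ^ #Jᶜ = if S = univ then 1 else 0 := by
  calc ∑ J with S ⊆ J, (-1 : R) ^ #Jᶜ = ∑ T ∈ Sᶜ.powerset, (-1 : R) ^ #T :=
        sum_bij' (fun J _ => Jᶜ) (fun T _ => Tᶜ) (by simp) (by simp [subset_compl_comm])
          (by simp) (by simp) (by simp)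
    _ = ((∑ T ∈ Sᶜ.powerset, (-1) ^ #T : ℤ) : R) := by push_cast; rfl
    _ = if S = univ then 1 else 0 := by
        simp [sum_powerset_neg_one_pow_card, compl_eq_empty_iff]

theorem polarization {M N : Type*} [AddCommGroup M] [AddCommGroup N] [Module R M] [Module R N]
    (f : MultilinearMap R (fun _ : ι => M) N) (x : ι → M) :
    ∑ J : Finset ι, (-1 : R) ^ #Jᶜ • f (fun _ => ∑ i ∈ J, x i) =
      ∑ σ : Equiv.Perm ι, f (x ∘ σ) := by
  have expand (J : Finset ι) : f (fun _ => ∑ i ∈ J, x i) =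
      ∑ r : ι → ι, if univ.image r ⊆ J then f (x ∘ r) else 0 := by
    rw [f.map_sum_finset, ← sum_filter]
    refine sum_congr ?_ fun _ _ => rfl
    ext r
    simp [subset_iff]
  have collect (r : ι → ι) :
      ∑ J : Finset ι, (-1 : R) ^ #Jᶜ • (if univ.image r ⊆ J then f (x ∘ r) else 0) =
        if univ.image r = univ then f (x ∘ r) else 0 := by
    simp only [smul_ite, smul_zero, ← sum_filter, ← sum_smul,
      sum_neg_one_pow_card_compl_superset, ite_smul, one_smul, zero_smul]
  simp only [expand, smul_sum]
  rw [sum_comm, sum_congr rfl fun r _ => collect r]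
  symm
  refine sum_of_injOn (fun σ => ⇑σ) DFunLike.coe_injective.injOn (by simp) ?_ ?_
  · intro r _ hr
    refine if_neg fun himage => hr ?_
    have hsurj : Function.Surjective r := fun i => by simpa using eq_univ_iff_forall.1 himage i
    exact ⟨Equiv.ofBijective r hsurj.bijective_of_finite, by simp, rfl⟩
  · exact fun σ _ => (if_pos (image_univ_equiv σ)).symm

/-- The determinant of the matrix whose `k`-th row is the `k`-th row of the `k`-th argument. -/
def detOfRows : MultilinearMap R (fun _ : ι => Matrix ι ι R) R :=
  Matrix.detRowAlternating.toMultilinearMap.compLinearMap fun k => LinearMap.proj k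

/-- The mixed discriminant of `#ι` square matrices: the polarization of `det`, normalized so that
its value on the constant family `A` is `(#ι)! * det A`. -/
def mixedDiscr : MultilinearMap R (fun _ : ι => Matrix ι ι R) R :=
  ∑ σ : Equiv.Perm ι, detOfRows.domDomCongr σ

theorem mixedDiscr_apply (A : ι → Matrix ι ι R) :
    mixedDiscr A = ∑ σ : Equiv.Perm ι, detOfRows (A ∘ σ) := by
  rw [mixedDiscr, _root_.sum_apply]
  rfl

theorem mixedDiscr_eq_sum_det_sum (A : ι → Matrix ι ι R) :
    mixedDiscr A = ∑ J : Finset ι, (-1) ^ #Jᶜ * (∑ i ∈ J, A i).det := by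
  rw [mixedDiscr_apply, ← polarization]
  rfl

theorem continuous_mixedDiscr [TopologicalSpace R] [IsTopologicalRing R] :
    Continuous fun A : ι → Matrix ι ι R => mixedDiscr A := by
  simp only [mixedDiscr_eq_sum_det_sum]
  fun_prop

theorem mixedDiscr_vecMulVec_self (u : ι → ι → R) :
    mixedDiscr (fun i => Matrix.vecMulVec (u i) (u i)) = (Matrix.of u).det ^ 2 := by
  have det_rows_perm (σ : Equiv.Perm ι) :
      detOfRows ((fun i => Matrix.vecMulVec (u i) (u i)) ∘ σ) =
        (σ.sign * ∏ k, u (σ k) k) * (Matrix.of u).det := by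
    calc _ = (∏ k, u (σ k) k) * ((Matrix.of u).submatrix σ id).det :=
          Matrix.det_mul_column (fun k => u (σ k) k) ((Matrix.of u).submatrix σ id)
      _ = _ := by rw [Matrix.det_permute]; ring
  rw [mixedDiscr_apply, sum_congr rfl fun σ _ => det_rows_perm σ, ← sum_mul, sq]
  exact congrArg (· * _) (Matrix.det_apply' _).symm

theorem mixedDiscr_sum_smul_vecMulVec_self {α : Type*} (S : ι → Finset α) (q : ι → α → R)
    (u : α → ι → R) :
    mixedDiscr (fun i => ∑ a ∈ S i, q i a • Matrix.vecMulVec (u a) (u a)) =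
      ∑ b ∈ Fintype.piFinset S, (∏ i, q i (b i)) * (Matrix.of fun i => u (b i)).det ^ 2 := by
  simp only [MultilinearMap.map_sum_finset, MultilinearMap.map_smul_univ,
    mixedDiscr_vecMulVec_self, smul_eq_mul]

end MixedDiscriminant

section Rado

variable {K ι E : Type*} [DivisionRing K] [AddCommGroup E] [Module K E]

/-- The hypothesis of Rado's theorem on independent transversals: the members of any subfamily
together span a space whose dimension is at least the size of the subfamily. -/
def RadoCondition (K : Type*) {ι E : Type*} [DivisionRing K] [AddCommGroup E] [Module K E]
    (A : ι → Finset E) : Prop :=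
  ∀ I : Finset ι, #I ≤ Set.finrank K (⋃ i ∈ I, (A i : Set E))

theorem finrank_union_add_finrank_le [FiniteDimensional K E] {R S T : Set E}
    (hS : R ⊆ S) (hT : R ⊆ T) :
    Set.finrank K (S ∪ T) + Set.finrank K R ≤ Set.finrank K S + Set.finrank K T := by
  rw [Set.finrank, Submodule.span_union]
  calc _ ≤ Module.finrank K ↥(Submodule.span K S ⊔ Submodule.span K T) +
        Module.finrank K ↥(Submodule.span K S ⊓ Submodule.span K T) := by
        gcongr
        exact Submodule.finrank_mono
          (le_inf (Submodule.span_mono hS) (Submodule.span_mono hT))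
    _ = _ := Submodule.finrank_sup_add_finrank_inf_eq _ _

theorem exists_finrank_le_of_not_radoCondition_update [DecidableEq ι] {A : ι → Finset E}
    (hA : RadoCondition K A) {j : ι} {B : Finset E}
    (hB : ¬RadoCondition K (Function.update A j B)) :
    ∃ I : Finset ι, j ∉ I ∧ Set.finrank K (↑B ∪ ⋃ i ∈ I, (A i : Set E)) ≤ #I := by
  have coe_update (i : ι) : (Function.update A j B i : Set E) =
      Function.update (fun i => (A i : Set E)) j ↑B i :=
    Function.apply_update (fun _ => ((↑) : Finset E → Set E)) A j B i
  simp only [RadoCondition, coe_update, not_forall, not_le] at hB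
  obtain ⟨I, hI⟩ := hB
  by_cases hj : j ∈ I
  · refine ⟨I.erase j, notMem_erase j I, ?_⟩
    rw [← insert_erase hj, set_biUnion_insert_update _ (notMem_erase j I),
      card_insert_of_notMem (notMem_erase j I)] at hI
    lia
  · have agree : ⋃ i ∈ I, Function.update (fun i => (A i : Set E)) j ↑B i =
        ⋃ i ∈ I, (A i : Set E) :=
      Set.iUnion₂_congr fun i hi => Function.update_of_ne (ne_of_mem_of_not_mem hi hj) _ _
    exact absurd (hA I) (agree ▸ hI.not_ge)

theorem RadoCondition.update_erase [FiniteDimensional K E] [DecidableEq ι] [DecidableEq E]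
    {A : ι → Finset E} (hA : RadoCondition K A) {j : ι} {x y : E} (hxy : x ≠ y) :
    RadoCondition K (Function.update A j ((A j).erase x)) ∨
      RadoCondition K (Function.update A j ((A j).erase y)) := by
  by_contra! ⟨hx, hy⟩
  obtain ⟨I, hjI, hI⟩ := exists_finrank_le_of_not_radoCondition_update hA hx
  obtain ⟨J, hjJ, hJ⟩ := exists_finrank_le_of_not_radoCondition_update hA hy
  have cover : ⋃ i ∈ insert j (I ∪ J), (A i : Set E) ⊆
      (↑((A j).erase x) ∪ ⋃ i ∈ I, (A i : Set E)) ∪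
        (↑((A j).erase y) ∪ ⋃ i ∈ J, (A i : Set E)) := by
    intro z
    simp only [Set.mem_iUnion, Set.mem_union, mem_coe, mem_insert, mem_union, mem_erase]
    grind
  have submodular := finrank_union_add_finrank_le (K := K) (R := ⋃ i ∈ I ∩ J, (A i : Set E))
    (S := ↑((A j).erase x) ∪ ⋃ i ∈ I, (A i : Set E))
    (T := ↑((A j).erase y) ∪ ⋃ i ∈ J, (A i : Set E))
    (Set.subset_union_of_subset_right (Set.biUnion_subset_biUnion_left inter_subset_left) _)
    (Set.subset_union_of_subset_right (Set.biUnion_subset_biUnion_left inter_subset_right) _)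
  have hunion := (hA (insert j (I ∪ J))).trans
    (Submodule.finrank_mono (Submodule.span_mono cover))
  rw [card_insert_of_notMem (by simp [hjI, hjJ])] at hunion
  have hinter := hA (I ∩ J)
  have hcard := card_union_add_card_inter I J
  simp only [Set.finrank] at *
  lia

theorem exists_linearIndependent_transversal_iff [FiniteDimensional K E] [Finite ι]
    {A : ι → Finset E} :
    (∃ f : ι → E, (∀ i, f i ∈ A i) ∧ LinearIndependent K f) ↔ RadoCondition K A := by
  classical
  cases nonempty_fintype ι
  constructor
  · rintro ⟨f, hf, hindep⟩ I
    calc #I = Set.finrank K (Set.range (f ∘ (Subtype.val : I → ι))) := by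
          rw [Set.finrank, finrank_span_eq_card (hindep.comp (Subtype.val : I → ι)
            Subtype.val_injective), Fintype.card_coe]
      _ ≤ _ := Submodule.finrank_mono <| Submodule.span_mono <| Set.range_subset_iff.2 fun i =>
          Set.mem_biUnion i.2 (hf i)
  · intro hA
    obtain ⟨B, hBA, hB, hmin⟩ := exists_minimal_le_of_wellFoundedLT (RadoCondition K) A hA
    have at_most_one (i : ι) {x y : E} (hx : x ∈ B i) (hy : y ∈ B i) : x = y := by
      by_contra hxy
      have not_smaller {z : E} (hz : z ∈ B i) :
          ¬RadoCondition K (Function.update B i ((B i).erase z)) := fun h =>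
        notMem_erase z (B i) (by
          simpa using hmin h (update_le_self_iff.2 (erase_subset z (B i))) i hz)
      exact (hB.update_erase hxy).elim (not_smaller hx) (not_smaller hy)
    have nonempty (i : ι) : (B i).Nonempty := by
      by_contra h
      simpa [not_nonempty_iff_eq_empty.1 h, Set.finrank] using hB {i}
    choose f hf using nonempty
    refine ⟨f, fun i => hBA i (hf i), linearIndependent_iff_card_le_finrank_span.2 ?_⟩
    calc Fintype.card ι ≤ Set.finrank K (⋃ i ∈ univ, (B i : Set E)) := hB univ
      _ ≤ Set.finrank K (Set.range f) := Submodule.finrank_mono <| Submodule.span_mono <|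
        Set.iUnion₂_subset fun i _ z hz => ⟨i, at_most_one i (hf i) hz⟩

end Rado

section VectorSpan

theorem vectorSpan_eq_span_sub {k E : Type*} [Ring k] [AddCommGroup E] [Module k E] (s : Set E) :
    vectorSpan k s = Submodule.span k (s - s) :=
  rfl

theorem vectorSpan_add {k E : Type*} [Ring k] [AddCommGroup E] [Module k E] {s t : Set E}
    (hs : s.Nonempty) (ht : t.Nonempty) :
    vectorSpan k (s + t) = vectorSpan k s ⊔ vectorSpan k t := by
  simp only [vectorSpan_eq_span_sub, add_sub_add_comm]
  apply le_antisymm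
  · rw [Submodule.span_le]
    exact Set.add_subset_iff.2 fun x hx y hy =>
      Submodule.add_mem_sup (Submodule.subset_span hx) (Submodule.subset_span hy)
  · exact sup_le
      (Submodule.span_mono (Set.subset_add_left (s - s) ht.zero_mem_sub))
      (Submodule.span_mono (Set.subset_add_right (t - t) hs.zero_mem_sub))

theorem vectorSpan_sum {k E ι : Type*} [Ring k] [AddCommGroup E] [Module k E]
    (I : Finset ι) {s : ι → Set E} (hs : ∀ i ∈ I, (s i).Nonempty) :
    vectorSpan k (∑ i ∈ I, s i) = ⨆ i ∈ I, vectorSpan k (s i) := by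
  classical
  induction I using Finset.induction_on with
  | empty => simp [← Set.singleton_zero]
  | insert i I hi ih =>
    have hI (j) (hj : j ∈ I) : (s j).Nonempty := hs j (mem_insert_of_mem hj)
    have hsum : (∑ j ∈ I, s j).Nonempty := by
      choose! z hz using hI
      exact ⟨_, Set.finsetSum_mem_finsetSum I s z hz⟩
    rw [sum_insert hi, vectorSpan_add (hs i (mem_insert_self i I)) hsum, ih hI, Finset.iSup_insert]

theorem vectorSpan_convexHull {E : Type*} [AddCommGroup E] [Module ℝ E] (s : Set E) :
    vectorSpan ℝ (convexHull ℝ s) = vectorSpan ℝ s := by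
  rw [← direction_affineSpan, affineSpan_convexHull, direction_affineSpan]

theorem addHaar_eq_zero_of_vectorSpan_ne_top {E : Type*} [NormedAddCommGroup E]
    [NormedSpace ℝ E] [MeasurableSpace E] [BorelSpace E] [FiniteDimensional ℝ E]
    (μ : Measure E) [μ.IsAddHaarMeasure] {s : Set E} (hs : vectorSpan ℝ s ≠ ⊤) : μ s = 0 :=
  measure_mono_null (subset_affineSpan ℝ s) <| Measure.addHaar_affineSubspace μ _ fun h =>
    hs (AffineSubspace.vectorSpan_eq_top_of_affineSpan_eq_top ℝ E E h)

theorem vectorSpan_sum_convexHull {ι E : Type*} [AddCommGroup E] [Module ℝ E] (I : Finset ι)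
    {V : ι → Finset E} (hV : ∀ i, (V i).Nonempty) :
    vectorSpan ℝ (∑ i ∈ I, convexHull ℝ (V i : Set E)) =
      Submodule.span ℝ (⋃ i ∈ I, (V i - V i : Set E)) := by
  rw [vectorSpan_sum I fun i _ => (coe_nonempty.2 (hV i)).convexHull, Submodule.span_iUnion₂]
  simp only [vectorSpan_convexHull, ← vectorSpan_eq_span_sub]

theorem adim_sum_convexHull {n : ℕ} {ι : Type*} (I : Finset ι) {V : ι → Finset (Fin n → ℝ)}
    (hV : ∀ i, (V i).Nonempty) :
    adim (∑ i ∈ I, convexHull ℝ (V i : Set (Fin n → ℝ))) =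
      Set.finrank ℝ (⋃ i ∈ I, (V i - V i : Set (Fin n → ℝ))) := by
  rw [adim, direction_affineSpan, vectorSpan_sum_convexHull I hV, Set.finrank]

theorem linearIndependent_iff_det_ne_zero {ι K : Type*} [Fintype ι] [DecidableEq ι] [Field K]
    (u : ι → ι → K) : LinearIndependent K u ↔ (Matrix.of u).det ≠ 0 := by
  rw [← isUnit_iff_ne_zero, ← Matrix.isUnit_iff_isUnit_det]
  exact Matrix.linearIndependent_rows_iff_isUnit (A := Matrix.of u)

theorem dim_condition_iff_exists_det_ne_zero {n : ℕ} {V : Fin n → Finset (Fin n → ℝ)}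
    (hV : ∀ i, (V i).Nonempty) :
    (∀ I : Finset (Fin n), I.Nonempty →
        #I ≤ adim (∑ i ∈ I, convexHull ℝ (V i : Set (Fin n → ℝ)))) ↔
      ∃ v w : Fin n → Fin n → ℝ, (∀ i, v i ∈ V i) ∧ (∀ i, w i ∈ V i) ∧
        (Matrix.of fun i => v i - w i).det ≠ 0 := by
  classical
  have rado : (∀ I : Finset (Fin n), I.Nonempty →
      #I ≤ adim (∑ i ∈ I, convexHull ℝ (V i : Set (Fin n → ℝ)))) ↔
      RadoCondition ℝ fun i => V i - V i := by
    simp only [RadoCondition, coe_sub, adim_sum_convexHull _ hV]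
    refine forall_congr' fun I => ⟨fun h => ?_, fun h _ => h⟩
    rcases I.eq_empty_or_nonempty with rfl | hI
    · simp
    · exact h hI
  rw [rado, ← exists_linearIndependent_transversal_iff]
  constructor
  · rintro ⟨f, hf, hindep⟩
    choose v hv w hw hvw using fun i => mem_sub.1 (hf i)
    refine ⟨v, w, hv, hw, (linearIndependent_iff_det_ne_zero _).1 ?_⟩
    rwa [funext hvw]
  · rintro ⟨v, w, hv, hw, hdet⟩
    exact ⟨_, fun i => sub_mem_sub (hv i) (hw i), (linearIndependent_iff_det_ne_zero _).2 hdet⟩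

end VectorSpan

section ConvexGradient

theorem interior_subset_range_fderiv {E : Type*} [NormedAddCommGroup E] [NormedSpace ℝ E]
    [FiniteDimensional ℝ E] {f : E → ℝ} {f' : E → StrongDual ℝ E}
    (hf : ∀ x, HasFDerivAt f (f' x) x) {S : Set (StrongDual ℝ E)} {K : ℝ}
    (hS : ∀ L ∈ S, ∀ x, L x ≤ f x + K) : interior S ⊆ Set.range f' := by
  intro L hL
  obtain ⟨ε, hε, hball⟩ := Metric.nhds_basis_closedBall.mem_iff.1 (mem_interior_iff_mem_nhds.1 hL)
  have coercive (x : E) : ε * ‖x‖ - K ≤ f x - L x := by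
    obtain ⟨N, hN, hNx⟩ := exists_dual_vector'' ℝ x
    have hmem : L + ε • N ∈ S := hball <| by
      rw [mem_closedBall_iff_norm, add_sub_cancel_left, norm_smul, Real.norm_of_nonneg hε.le]
      exact mul_le_of_le_one_right hε.le hN
    have := hS _ hmem x
    simp only [add_apply, smul_apply, hNx, smul_eq_mul, RCLike.ofReal_real_eq_id, id] at this
    linarith
  have htends : Filter.Tendsto (fun x => f x - L x) (Filter.cocompact E) Filter.atTop :=
    Filter.tendsto_atTop_mono coercive <| Filter.tendsto_atTop_add_const_right _ _ <|
      (tendsto_norm_cocompact_atTop).const_mul_atTop hε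
  have hderiv (x : E) : HasFDerivAt (fun x => f x - L x) (f' x - L) x := (hf x).sub L.hasFDerivAt
  obtain ⟨x, hx⟩ := Continuous.exists_forall_le
    (continuous_iff_continuousAt.2 fun x => (hderiv x).continuousAt) htends
  have hmin : IsLocalMin (fun x => f x - L x) x := Filter.Eventually.of_forall hx
  exact ⟨x, sub_eq_zero.1 (hmin.hasFDerivAt_eq_zero (hderiv x))⟩

theorem injective_of_hasFDerivAt_pos {E : Type*} [NormedAddCommGroup E] [NormedSpace ℝ E]
    {g : E → StrongDual ℝ E} {g' : E → E →L[ℝ] StrongDual ℝ E}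
    (hg : ∀ x, HasFDerivAt g (g' x) x) (hpos : ∀ x h, h ≠ 0 → 0 < g' x h h) :
    Function.Injective g := by
  intro x y hxy
  by_contra hne
  have hline (t : ℝ) : HasDerivAt (fun t : ℝ => x + t • (y - x)) (y - x) t := by
    simpa using ((hasDerivAt_id t).smul_const (y - x)).const_add x
  have hderiv (t : ℝ) : HasDerivAt (fun t : ℝ => g (x + t • (y - x)) (y - x))
      (g' (x + t • (y - x)) (y - x) (y - x)) t := by
    simpa using ((hg _).comp_hasDerivAt t (hline t)).clm_apply (hasDerivAt_const t (y - x))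
  have hmono := strictMono_of_deriv_pos fun t =>
    (hderiv t).deriv ▸ hpos _ _ (sub_ne_zero.2 (Ne.symm hne))
  simpa [hxy] using hmono zero_lt_one

variable {ι : Type*} [Fintype ι]

/-- The identification of `ι → ℝ` with its dual by the dot product. -/
noncomputable def dotProductCLE (ι : Type*) [Fintype ι] [DecidableEq ι] :
    (ι → ℝ) ≃L[ℝ] StrongDual ℝ (ι → ℝ) :=
  ((dotProductEquiv ℝ ι).trans LinearMap.toContinuousLinearMap).toContinuousLinearEquiv

variable [DecidableEq ι]

theorem dotProductCLE_apply (v x : ι → ℝ) : dotProductCLE ι v x = v ⬝ᵥ x :=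
  rfl

theorem volume_eq_lintegral_det_hessian {f : (ι → ℝ) → ℝ} {g : (ι → ℝ) → ι → ℝ}
    {M : (ι → ℝ) → Matrix ι ι ℝ} (hf : ∀ x, HasFDerivAt f (dotProductCLE ι (g x)) x)
    (hg : ∀ x, HasFDerivAt g (Matrix.toLin' (M x)).toContinuousLinearMap x)
    (hM : ∀ x, (M x).PosDef) {P : Set (ι → ℝ)} (hP : Convex ℝ P) (hgP : ∀ x, g x ∈ P)
    {K : ℝ} (hfP : ∀ y ∈ P, ∀ x, y ⬝ᵥ x ≤ f x + K) :
    volume P = ∫⁻ x, ENNReal.ofReal (M x).det := by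
  have hinj : Function.Injective g := by
    have hg' (x) := (dotProductCLE ι).hasFDerivAt.comp x (hg x)
    refine (injective_of_hasFDerivAt_pos hg' fun x h hh => ?_).of_comp
    simpa [dotProductCLE_apply, dotProduct_comm _ h] using (hM x).dotProduct_mulVec_pos hh
  have hinterior : interior P ⊆ Set.range g := by
    have hdual := interior_subset_range_fderiv hf (S := dotProductCLE ι '' P) (K := K) <| by
      rintro _ ⟨y, hy, rfl⟩
      exact hfP y hy
    rw [← (dotProductCLE ι).coe_toHomeomorph, ← Homeomorph.image_interior] at hdual
    intro y hy
    obtain ⟨x, hx⟩ := hdual ⟨y, hy, rfl⟩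
    exact ⟨x, (dotProductCLE ι).injective hx⟩
  have hvol : volume P = volume (g '' Set.univ) := by
    rw [Set.image_univ]
    refine le_antisymm ?_ (measure_mono (Set.range_subset_iff.2 hgP))
    rw [← measure_interior_of_null_frontier (hP.addHaar_frontier volume)]
    exact measure_mono hinterior
  rw [hvol, ← lintegral_abs_det_fderiv_eq_addHaar_image volume MeasurableSet.univ
    (fun x _ => (hg x).hasFDerivWithinAt) hinj.injOn, Measure.restrict_univ]
  refine lintegral_congr fun x => ?_
  rw [ContinuousLinearMap.det, LinearMap.coe_toContinuousLinearMap, LinearMap.det_toLin',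
    abs_of_pos (hM x).det_pos]

end ConvexGradient

theorem sum_mul_sub_mean_smul_eq {α E : Type*} [AddCommGroup E] [Module ℝ E] (s : Finset α)
    {p : α → ℝ} (hp : ∑ v ∈ s, p v = 1) (a : α → ℝ) (b : α → E) :
    ∑ v ∈ s, (p v * (a v - ∑ w ∈ s, p w * a w)) • b v =
      ∑ v ∈ s ×ˢ s, (p v.1 * p v.2 / 2 * (a v.1 - a v.2)) • (b v.1 - b v.2) := by
  have expand (v : α) : (p v * (a v - ∑ w ∈ s, p w * a w)) • b v =
      ∑ w ∈ s, (p v * p w * (a v - a w)) • b v := by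
    simp only [mul_assoc, ← sum_smul, ← mul_sum, mul_sub, sum_sub_distrib, ← sum_mul, hp,
      one_mul]
  have swap : ∑ v ∈ s ×ˢ s, (p v.1 * p v.2 / 2 * (a v.1 - a v.2)) • b v.2 =
      -∑ v ∈ s ×ˢ s, (p v.1 * p v.2 / 2 * (a v.1 - a v.2)) • b v.1 := by
    rw [sum_product_right, sum_product, ← sum_neg_distrib]
    refine sum_congr rfl fun v _ => ?_
    rw [← sum_neg_distrib]
    refine sum_congr rfl fun w _ => ?_
    rw [← neg_smul]
    ring_nf
  simp only [expand, smul_sub, sum_sub_distrib, swap, sub_neg_eq_add, ← sum_add_distrib,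
    ← add_smul]
  rw [sum_product]
  refine sum_congr rfl fun v _ => sum_congr rfl fun w _ => ?_
  ring_nf

section Gibbs

variable {ι : Type*} [Fintype ι] {V : Finset (ι → ℝ)} {b : (ι → ℝ) → ℝ} {x : ι → ℝ}

/-- The partition function of the points `v ∈ V` with energies `b v + v ⬝ᵥ x`. Its logarithm is
a smooth convex function of `x` with gradient in the convex hull of `V`. -/
noncomputable def gibbsSum (V : Finset (ι → ℝ)) (b : (ι → ℝ) → ℝ) (x : ι → ℝ) : ℝ :=
  ∑ v ∈ V, Real.exp (b v + v ⬝ᵥ x)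

/-- The probability of the point `v` under the Gibbs distribution on `V`. -/
noncomputable def gibbsWeight (V : Finset (ι → ℝ)) (b : (ι → ℝ) → ℝ) (x v : ι → ℝ) : ℝ :=
  Real.exp (b v + v ⬝ᵥ x) / gibbsSum V b x

/-- The barycenter of the Gibbs distribution on `V`, as a function of the parameter `x`. -/
noncomputable def momentMap (V : Finset (ι → ℝ)) (b : (ι → ℝ) → ℝ) (x : ι → ℝ) : ι → ℝ :=
  ∑ v ∈ V, gibbsWeight V b x v • v

/-- The covariance matrix of the Gibbs distribution on `V`, written as half the second moment of
the difference of two independent samples. -/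
noncomputable def gibbsCov (V : Finset (ι → ℝ)) (b : (ι → ℝ) → ℝ) (x : ι → ℝ) : Matrix ι ι ℝ :=
  ∑ a ∈ V ×ˢ V, (gibbsWeight V b x a.1 * gibbsWeight V b x a.2 / 2) •
    Matrix.vecMulVec (a.1 - a.2) (a.1 - a.2)

theorem gibbsSum_pos (hV : V.Nonempty) : 0 < gibbsSum V b x :=
  sum_pos (fun _ _ => Real.exp_pos _) hV

theorem gibbsWeight_pos (hV : V.Nonempty) (v : ι → ℝ) : 0 < gibbsWeight V b x v :=
  div_pos (Real.exp_pos _) (gibbsSum_pos hV)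

theorem sum_gibbsWeight (hV : V.Nonempty) : ∑ v ∈ V, gibbsWeight V b x v = 1 := by
  simp only [gibbsWeight, ← sum_div]
  exact div_self (gibbsSum_pos hV).ne'

theorem momentMap_mem_convexHull (hV : V.Nonempty) :
    momentMap V b x ∈ convexHull ℝ (V : Set (ι → ℝ)) :=
  (convex_convexHull ℝ _).sum_mem (fun v _ => (gibbsWeight_pos hV v).le) (sum_gibbsWeight hV)
    fun _ hv => subset_convexHull ℝ _ hv

theorem exists_dotProduct_le_log_gibbsSum_add (V : Finset (ι → ℝ)) (b : (ι → ℝ) → ℝ) :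
    ∃ K, ∀ y ∈ convexHull ℝ (V : Set (ι → ℝ)), ∀ x, y ⬝ᵥ x ≤ Real.log (gibbsSum V b x) + K := by
  obtain ⟨K, hK⟩ := (V.image fun v => -b v).bddAbove
  refine ⟨K, fun y hy x => ?_⟩
  have hconvex : Convex ℝ {y : ι → ℝ | y ⬝ᵥ x ≤ Real.log (gibbsSum V b x) + K} :=
    convex_halfSpace_le ⟨fun y z => add_dotProduct y z x, fun c y => smul_dotProduct c y x⟩ _
  refine convexHull_min (fun v hv => ?_) hconvex hy
  have hle : b v + v ⬝ᵥ x ≤ Real.log (gibbsSum V b x) := by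
    rw [← Real.log_exp (b v + v ⬝ᵥ x)]
    exact Real.log_le_log (Real.exp_pos _)
      (single_le_sum (f := fun v => Real.exp (b v + v ⬝ᵥ x)) (fun _ _ => (Real.exp_pos _).le) hv)
  have hbv : -b v ≤ K := hK (mem_coe.2 (mem_image_of_mem _ hv))
  change v ⬝ᵥ x ≤ _
  linarith

theorem gibbsCov_mulVec (h : ι → ℝ) :
    (gibbsCov V b x).mulVec h = ∑ a ∈ V ×ˢ V,
      (gibbsWeight V b x a.1 * gibbsWeight V b x a.2 / 2 * ((a.1 - a.2) ⬝ᵥ h)) •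
        (a.1 - a.2) := by
  simp only [gibbsCov, Matrix.sum_mulVec, Matrix.smul_mulVec, Matrix.vecMulVec_mulVec,
    op_smul_eq_smul, smul_smul]

theorem dotProduct_gibbsCov_mulVec (h : ι → ℝ) :
    h ⬝ᵥ (gibbsCov V b x).mulVec h = ∑ a ∈ V ×ˢ V,
      gibbsWeight V b x a.1 * gibbsWeight V b x a.2 / 2 * ((a.1 - a.2) ⬝ᵥ h) ^ 2 := by
  rw [gibbsCov_mulVec, dotProduct_comm, sum_dotProduct]
  simp only [smul_dotProduct, smul_eq_mul, mul_assoc, sq]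

theorem gibbsCov_posSemidef (hV : V.Nonempty) : (gibbsCov V b x).PosSemidef := by
  refine Matrix.posSemidef_sum _ fun a _ => Matrix.PosSemidef.smul ?_ ?_
  · simpa only [star_trivial] using Matrix.posSemidef_vecMulVec_self_star (a.1 - a.2)
  · exact div_nonneg (mul_pos (gibbsWeight_pos hV _) (gibbsWeight_pos hV _)).le zero_le_two

theorem continuous_gibbsCov (hV : V.Nonempty) (b : (ι → ℝ) → ℝ) :
    Continuous (gibbsCov V b) := by
  have hweight (v : ι → ℝ) : Continuous fun x => gibbsWeight V b x v := by
    refine Continuous.div ?_ ?_ fun x => (gibbsSum_pos hV).ne'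
    · fun_prop
    · unfold gibbsSum
      fun_prop
  unfold gibbsCov
  fun_prop

variable [DecidableEq ι]

theorem hasFDerivAt_log_gibbsSum (hV : V.Nonempty) (b : (ι → ℝ) → ℝ) (x : ι → ℝ) :
    HasFDerivAt (fun x => Real.log (gibbsSum V b x)) (dotProductCLE ι (momentMap V b x)) x := by
  have hexp (v : ι → ℝ) : HasFDerivAt (fun x => Real.exp (b v + v ⬝ᵥ x))
      (Real.exp (b v + v ⬝ᵥ x) • dotProductCLE ι v) x :=
    ((dotProductCLE ι v).hasFDerivAt.const_add (b v)).exp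
  refine ((HasFDerivAt.fun_sum fun v _ => hexp v).log (gibbsSum_pos hV).ne').congr_fderiv ?_
  simp only [momentMap, map_sum, map_smul, smul_sum, smul_smul, gibbsWeight, div_eq_inv_mul]
  rfl

theorem hasFDerivAt_gibbsWeight (hV : V.Nonempty) (b : (ι → ℝ) → ℝ) (x v : ι → ℝ) :
    HasFDerivAt (fun x => gibbsWeight V b x v)
      (gibbsWeight V b x v • dotProductCLE ι (v - momentMap V b x)) x := by
  have eq_exp (x : ι → ℝ) : gibbsWeight V b x v =
      Real.exp (b v + v ⬝ᵥ x - Real.log (gibbsSum V b x)) := by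
    rw [Real.exp_sub, Real.exp_log (gibbsSum_pos hV), gibbsWeight]
  simp only [eq_exp, map_sub]
  exact (((dotProductCLE ι v).hasFDerivAt.const_add (b v)).sub
    (hasFDerivAt_log_gibbsSum hV b x)).exp

theorem hasFDerivAt_momentMap (hV : V.Nonempty) (b : (ι → ℝ) → ℝ) (x : ι → ℝ) :
    HasFDerivAt (momentMap V b) (Matrix.toLin' (gibbsCov V b x)).toContinuousLinearMap x := by
  refine (HasFDerivAt.fun_sum fun v _ =>
    (hasFDerivAt_gibbsWeight hV b x v).smul_const v).congr_fderiv ?_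
  ext1 h
  have := sum_mul_sub_mean_smul_eq V (sum_gibbsWeight hV (b := b) (x := x)) (fun v => v ⬝ᵥ h) id
  simpa [gibbsCov_mulVec, dotProductCLE_apply, momentMap, sub_dotProduct, sum_dotProduct]
    using this

end Gibbs

section MinkowskiSum

theorem span_eq_top_iff_dotProduct {ι : Type*} [Fintype ι] {S : Set (ι → ℝ)} :
    Submodule.span ℝ S = ⊤ ↔ ∀ h : ι → ℝ, (∀ u ∈ S, u ⬝ᵥ h = 0) → h = 0 := by
  classical
  constructor
  · intro hS h hSh
    have hle : Submodule.span ℝ S ≤ (dotProductEquiv ℝ ι h).ker :=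
      Submodule.span_le.2 fun u hu => (dotProduct_comm h u).trans (hSh u hu)
    exact dotProduct_self_eq_zero.1 (hle (hS ▸ Submodule.mem_top : h ∈ _))
  · contrapose!
    intro hS
    obtain ⟨L, hL, hle⟩ := Submodule.exists_le_ker_of_lt_top _ (lt_top_iff_ne_top.2 hS)
    obtain ⟨h, rfl⟩ := (dotProductEquiv ℝ ι).surjective L
    exact ⟨h, fun u hu => (dotProduct_comm u h).trans (hle (Submodule.subset_span hu)),
      fun hzero => hL (by rw [hzero, map_zero])⟩

variable {ι κ : Type*} [Fintype ι] {V : κ → Finset (ι → ℝ)}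

theorem sum_gibbsCov_posSemidef (hV : ∀ i, (V i).Nonempty) (b : κ → (ι → ℝ) → ℝ)
    (J : Finset κ) (x : ι → ℝ) : (∑ i ∈ J, gibbsCov (V i) (b i) x).PosSemidef :=
  Matrix.posSemidef_sum J fun i _ => gibbsCov_posSemidef (hV i)

theorem dotProduct_sum_gibbsCov_mulVec_eq_zero_iff (hV : ∀ i, (V i).Nonempty)
    (b : κ → (ι → ℝ) → ℝ) (J : Finset κ) (x h : ι → ℝ) :
    h ⬝ᵥ (∑ i ∈ J, gibbsCov (V i) (b i) x).mulVec h = 0 ↔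
      ∀ i ∈ J, ∀ v ∈ V i, ∀ w ∈ V i, (v - w) ⬝ᵥ h = 0 := by
  have hweight (i : κ) (a : (ι → ℝ) × (ι → ℝ)) :
      0 < gibbsWeight (V i) (b i) x a.1 * gibbsWeight (V i) (b i) x a.2 / 2 :=
    half_pos (mul_pos (gibbsWeight_pos (hV i) _) (gibbsWeight_pos (hV i) _))
  have hterm (i : κ) (a : (ι → ℝ) × (ι → ℝ)) :
      0 ≤ gibbsWeight (V i) (b i) x a.1 * gibbsWeight (V i) (b i) x a.2 / 2 *
        ((a.1 - a.2) ⬝ᵥ h) ^ 2 :=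
    mul_nonneg (hweight i a).le (sq_nonneg _)
  simp only [Matrix.sum_mulVec, dotProduct_sum, dotProduct_gibbsCov_mulVec]
  rw [sum_eq_zero_iff_of_nonneg fun i _ => sum_nonneg fun a _ => hterm i a]
  simp only [sum_eq_zero_iff_of_nonneg fun a _ => hterm _ a, mul_eq_zero, (hweight _ _).ne',
    false_or, sq_eq_zero_iff, mem_product, Prod.forall]
  grind

theorem sum_gibbsCov_posDef_iff (hV : ∀ i, (V i).Nonempty) (b : κ → (ι → ℝ) → ℝ)
    (J : Finset κ) (x : ι → ℝ) :
    (∑ i ∈ J, gibbsCov (V i) (b i) x).PosDef ↔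
      vectorSpan ℝ (∑ i ∈ J, convexHull ℝ (V i : Set (ι → ℝ))) = ⊤ := by
  have hpsd := sum_gibbsCov_posSemidef hV b J x
  have hdiff (h : ι → ℝ) : (∀ u ∈ ⋃ i ∈ J, (V i - V i : Set (ι → ℝ)), u ⬝ᵥ h = 0) ↔
      h ⬝ᵥ (∑ i ∈ J, gibbsCov (V i) (b i) x).mulVec h = 0 := by
    simp only [dotProduct_sum_gibbsCov_mulVec_eq_zero_iff hV, Set.mem_iUnion, Set.mem_sub]
    grind
  simp only [vectorSpan_sum_convexHull J hV, span_eq_top_iff_dotProduct, hdiff]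
  constructor
  · intro hpd h hh
    by_contra hne
    exact (hpd.dotProduct_mulVec_pos hne).ne' (by simpa using hh)
  · refine fun hpos => Matrix.PosDef.of_dotProduct_mulVec_pos hpsd.1 fun h hh => ?_
    exact (hpsd.dotProduct_mulVec_nonneg h).lt_of_ne' fun hzero =>
      hh (hpos h (by simpa using hzero))

variable [DecidableEq ι]

theorem det_sum_gibbsCov_eq_zero (hV : ∀ i, (V i).Nonempty) (b : κ → (ι → ℝ) → ℝ)
    {J : Finset κ} (hJ : vectorSpan ℝ (∑ i ∈ J, convexHull ℝ (V i : Set (ι → ℝ))) ≠ ⊤)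
    (x : ι → ℝ) : (∑ i ∈ J, gibbsCov (V i) (b i) x).det = 0 := by
  by_contra hdet
  exact hJ <| (sum_gibbsCov_posDef_iff hV b J x).1 <|
    (sum_gibbsCov_posSemidef hV b J x).posDef_iff_isUnit.2 <|
      (Matrix.isUnit_iff_isUnit_det _).2 (isUnit_iff_ne_zero.2 hdet)

theorem volume_sum_convexHull (hV : ∀ i, (V i).Nonempty) (b : κ → (ι → ℝ) → ℝ) (J : Finset κ) :
    volume (∑ i ∈ J, convexHull ℝ (V i : Set (ι → ℝ))) =
      ∫⁻ x, ENNReal.ofReal (∑ i ∈ J, gibbsCov (V i) (b i) x).det := by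
  by_cases hJ : vectorSpan ℝ (∑ i ∈ J, convexHull ℝ (V i : Set (ι → ℝ))) = ⊤
  · choose K hK using fun i => exists_dotProduct_le_log_gibbsSum_add (V i) (b i)
    refine volume_eq_lintegral_det_hessian
      (f := fun x => ∑ i ∈ J, Real.log (gibbsSum (V i) (b i) x))
      (g := fun x => ∑ i ∈ J, momentMap (V i) (b i) x) (K := ∑ i ∈ J, K i)
      (fun x => ?_) (fun x => ?_) (fun x => (sum_gibbsCov_posDef_iff hV b J x).2 hJ)
      (convex_sum _ fun i _ => convex_convexHull ℝ _)
      (fun x => Set.finsetSum_mem_finsetSum _ _ _ fun i _ => momentMap_mem_convexHull (hV i)) ?_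
    · rw [map_sum]
      exact HasFDerivAt.fun_sum fun i _ => hasFDerivAt_log_gibbsSum (hV i) (b i) x
    · rw [map_sum, map_sum]
      exact HasFDerivAt.fun_sum fun i _ => hasFDerivAt_momentMap (hV i) (b i) x
    · intro y hy x
      obtain ⟨z, hz, rfl⟩ := (Set.mem_finsetSum _ _ _).1 hy
      rw [sum_dotProduct, ← sum_add_distrib]
      exact sum_le_sum fun i hi => hK i _ (hz hi) x
  · simp only [det_sum_gibbsCov_eq_zero hV b hJ, ENNReal.ofReal_zero, lintegral_zero]
    exact addHaar_eq_zero_of_vectorSpan_ne_top volume hJ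

theorem integrable_det_sum_gibbsCov (hV : ∀ i, (V i).Nonempty) (b : κ → (ι → ℝ) → ℝ)
    (J : Finset κ) :
    Integrable fun x => (∑ i ∈ J, gibbsCov (V i) (b i) x).det := by
  have hcompact : IsCompact (∑ i ∈ J, convexHull ℝ (V i : Set (ι → ℝ))) :=
    Finset.sum_induction _ IsCompact (fun _ _ hs ht => hs.add ht) isCompact_singleton
      fun i _ => (V i).finite_toSet.isCompact_convexHull ℝ
  have hcont : Continuous fun x => (∑ i ∈ J, gibbsCov (V i) (b i) x).det :=
    (continuous_finsetSum J fun i _ => continuous_gibbsCov (hV i) (b i)).matrix_det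
  refine ⟨hcont.aestronglyMeasurable, (hasFiniteIntegral_iff_ofReal (ae_of_all _ fun x =>
    (sum_gibbsCov_posSemidef hV b J x).det_nonneg)).2 ?_⟩
  rw [← volume_sum_convexHull hV b J]
  exact hcompact.measure_lt_top

theorem toReal_volume_sum_convexHull (hV : ∀ i, (V i).Nonempty) (b : κ → (ι → ℝ) → ℝ)
    (J : Finset κ) :
    (volume (∑ i ∈ J, convexHull ℝ (V i : Set (ι → ℝ)))).toReal =
      ∫ x, (∑ i ∈ J, gibbsCov (V i) (b i) x).det := by
  rw [volume_sum_convexHull hV b J, integral_eq_lintegral_of_nonneg_ae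
    (ae_of_all _ fun x => (sum_gibbsCov_posSemidef hV b J x).det_nonneg)
    (integrable_det_sum_gibbsCov hV b J).aestronglyMeasurable]

end MinkowskiSum

section MixedVolume

section GibbsDiscriminant

variable {ι : Type*} [Fintype ι] [DecidableEq ι] {V : ι → Finset (ι → ℝ)}

theorem mixedDiscr_gibbsCov (V : ι → Finset (ι → ℝ)) (b : ι → (ι → ℝ) → ℝ) (x : ι → ℝ) :
    mixedDiscr (fun i => gibbsCov (V i) (b i) x) =
      ∑ a ∈ Fintype.piFinset fun i => V i ×ˢ V i,
        (∏ i, gibbsWeight (V i) (b i) x (a i).1 * gibbsWeight (V i) (b i) x (a i).2 / 2) *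
          (Matrix.of fun i => (a i).1 - (a i).2).det ^ 2 :=
  mixedDiscr_sum_smul_vecMulVec_self (fun i => V i ×ˢ V i)
    (fun i a => gibbsWeight (V i) (b i) x a.1 * gibbsWeight (V i) (b i) x a.2 / 2)
    fun a => a.1 - a.2

theorem mixedDiscr_gibbsCov_nonneg (hV : ∀ i, (V i).Nonempty) (b : ι → (ι → ℝ) → ℝ)
    (x : ι → ℝ) : 0 ≤ mixedDiscr (fun i => gibbsCov (V i) (b i) x) := by
  rw [mixedDiscr_gibbsCov]
  exact sum_nonneg fun a _ => mul_nonneg (prod_nonneg fun i _ => (half_pos (mul_pos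
    (gibbsWeight_pos (hV i) _) (gibbsWeight_pos (hV i) _))).le) (sq_nonneg _)

theorem continuous_mixedDiscr_gibbsCov (hV : ∀ i, (V i).Nonempty) (b : ι → (ι → ℝ) → ℝ) :
    Continuous fun x => mixedDiscr (fun i => gibbsCov (V i) (b i) x) :=
  continuous_mixedDiscr.comp (continuous_pi fun i => continuous_gibbsCov (hV i) (b i))

theorem integrable_mixedDiscr_gibbsCov (hV : ∀ i, (V i).Nonempty) (b : ι → (ι → ℝ) → ℝ) :
    Integrable fun x => mixedDiscr (fun i => gibbsCov (V i) (b i) x) := by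
  simp only [mixedDiscr_eq_sum_det_sum]
  exact integrable_finsetSum _ fun J _ => (integrable_det_sum_gibbsCov hV b J).const_mul _

end GibbsDiscriminant

open Filter Topology in
theorem tendsto_gibbsCov_of_subset {ι : Type*} [Fintype ι] [DecidableEq (ι → ℝ)]
    {V W : Finset (ι → ℝ)} (hWV : W ⊆ V) (hW : W.Nonempty) (x : ι → ℝ) :
    Tendsto (fun k : ℕ => gibbsCov V (fun v => if v ∈ W then 0 else -(k : ℝ)) x) atTop
      (𝓝 (gibbsCov W 0 x)) := by
  have hexp (v : ι → ℝ) :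
      Tendsto (fun k : ℕ => Real.exp ((if v ∈ W then 0 else -(k : ℝ)) + v ⬝ᵥ x)) atTop
        (𝓝 (if v ∈ W then Real.exp (0 + v ⬝ᵥ x) else 0)) := by
    split_ifs
    · exact tendsto_const_nhds
    · exact Real.tendsto_exp_atBot.comp <| tendsto_atBot_add_const_right _ _ <|
        tendsto_neg_atTop_atBot.comp tendsto_natCast_atTop_atTop
  have hsum : Tendsto (fun k : ℕ => gibbsSum V (fun v => if v ∈ W then 0 else -(k : ℝ)) x) atTop
      (𝓝 (gibbsSum W 0 x)) := by
    have hlim := tendsto_finsetSum V fun v _ => hexp v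
    rwa [← sum_filter, filter_mem_eq_inter, inter_eq_right.2 hWV] at hlim
  have hweight (v : ι → ℝ) :
      Tendsto (fun k : ℕ => gibbsWeight V (fun v => if v ∈ W then 0 else -(k : ℝ)) x v) atTop
        (𝓝 (if v ∈ W then gibbsWeight W 0 x v else 0)) := by
    have hlim := (hexp v).div hsum (gibbsSum_pos hW).ne'
    rwa [ite_div, zero_div] at hlim
  have hcov : gibbsCov W 0 x = ∑ a ∈ V ×ˢ V, ((if a.1 ∈ W then gibbsWeight W 0 x a.1 else 0) *
      (if a.2 ∈ W then gibbsWeight W 0 x a.2 else 0) / 2) •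
        Matrix.vecMulVec (a.1 - a.2) (a.1 - a.2) := by
    rw [← sum_subset (product_subset_product hWV hWV) fun a _ ha => ?_]
    · refine sum_congr rfl fun a ha => ?_
      simp only [(mem_product.1 ha).1, (mem_product.1 ha).2, if_true]
    · rw [mem_product, not_and_or] at ha
      rcases ha with ha | ha <;> simp [ha]
  rw [hcov]
  exact tendsto_finsetSum _ fun a _ =>
    (((hweight a.1).mul (hweight a.2)).div_const 2).smul_const _

variable {n : ℕ} {V : Fin n → Finset (Fin n → ℝ)}

theorem mixedVol_eq_integral_mixedDiscr (hV : ∀ i, (V i).Nonempty)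
    (b : Fin n → (Fin n → ℝ) → ℝ) :
    mixedVol (fun i => convexHull ℝ (V i : Set (Fin n → ℝ))) =
      ∫ x, mixedDiscr (fun i => gibbsCov (V i) (b i) x) := by
  simp only [mixedVol, mixedDiscr_eq_sum_det_sum, toReal_volume_sum_convexHull hV b]
  rw [integral_finsetSum _ fun J _ => (integrable_det_sum_gibbsCov hV b J).const_mul _]
  refine sum_congr rfl fun J _ => ?_
  rw [integral_const_mul, card_compl, Fintype.card_fin]

theorem ofReal_mixedVol (hV : ∀ i, (V i).Nonempty) (b : Fin n → (Fin n → ℝ) → ℝ) :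
    ENNReal.ofReal (mixedVol fun i => convexHull ℝ (V i : Set (Fin n → ℝ))) =
      ∫⁻ x, ENNReal.ofReal (mixedDiscr fun i => gibbsCov (V i) (b i) x) := by
  rw [mixedVol_eq_integral_mixedDiscr hV b, ofReal_integral_eq_lintegral_ofReal
    (integrable_mixedDiscr_gibbsCov hV b) (ae_of_all _ (mixedDiscr_gibbsCov_nonneg hV b))]

theorem mixedVol_nonneg (hV : ∀ i, (V i).Nonempty) :
    0 ≤ mixedVol fun i => convexHull ℝ (V i : Set (Fin n → ℝ)) := by
  rw [mixedVol_eq_integral_mixedDiscr hV 0]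
  exact integral_nonneg (mixedDiscr_gibbsCov_nonneg hV 0)

theorem mixedVol_eq_zero_of_forall_det_eq_zero (hV : ∀ i, (V i).Nonempty)
    (hdet : ∀ v w : Fin n → Fin n → ℝ, (∀ i, v i ∈ V i) → (∀ i, w i ∈ V i) →
      (Matrix.of fun i => v i - w i).det = 0) :
    mixedVol (fun i => convexHull ℝ (V i : Set (Fin n → ℝ))) = 0 := by
  rw [mixedVol_eq_integral_mixedDiscr hV 0]
  refine integral_eq_zero_of_ae (ae_of_all _ fun x => ?_)
  simp only [mixedDiscr_gibbsCov, Pi.zero_apply]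
  refine sum_eq_zero fun a ha => ?_
  simp only [Fintype.mem_piFinset, mem_product] at ha
  rw [hdet _ _ (fun i => (ha i).1) (fun i => (ha i).2), sq, mul_zero, mul_zero]

open Filter Topology in
theorem mixedVol_convexHull_mono {W : Fin n → Finset (Fin n → ℝ)} (hWV : ∀ i, W i ⊆ V i)
    (hW : ∀ i, (W i).Nonempty) :
    mixedVol (fun i => convexHull ℝ (W i : Set (Fin n → ℝ))) ≤
      mixedVol (fun i => convexHull ℝ (V i : Set (Fin n → ℝ))) := by
  classical
  have hV (i : Fin n) : (V i).Nonempty := (hW i).mono (hWV i)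
  let b (k : ℕ) (i : Fin n) (v : Fin n → ℝ) : ℝ := if v ∈ W i then 0 else -k
  let D (k : ℕ) (x : Fin n → ℝ) : ENNReal :=
    ENNReal.ofReal (mixedDiscr fun i => gibbsCov (V i) (b k i) x)
  have hD (x : Fin n → ℝ) : Tendsto (D · x) atTop
      (𝓝 (ENNReal.ofReal (mixedDiscr fun i => gibbsCov (W i) 0 x))) :=
    ENNReal.tendsto_ofReal <| (continuous_mixedDiscr.tendsto _).comp <|
      tendsto_pi_nhds.2 fun i => tendsto_gibbsCov_of_subset (hWV i) (hW i) x
  refine (ENNReal.ofReal_le_ofReal_iff (mixedVol_nonneg hV)).1 ?_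
  calc ENNReal.ofReal (mixedVol fun i => convexHull ℝ (W i : Set (Fin n → ℝ)))
      = ∫⁻ x, ENNReal.ofReal (mixedDiscr fun i => gibbsCov (W i) 0 x) := ofReal_mixedVol hW 0
    _ = ∫⁻ x, liminf (D · x) atTop := lintegral_congr fun x => (hD x).liminf_eq.symm
    _ ≤ liminf (fun k => ∫⁻ x, D k x) atTop := lintegral_liminf_le fun k =>
        (continuous_mixedDiscr_gibbsCov hV (b k)).measurable.ennreal_ofReal
    _ = ENNReal.ofReal (mixedVol fun i => convexHull ℝ (V i : Set (Fin n → ℝ))) := by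
        simp only [D, ← ofReal_mixedVol hV, liminf_const]

end MixedVolume

section Segments

theorem segment_eq_singleton_add {E : Type*} [AddCommGroup E] [Module ℝ E] (v w : E) :
    segment ℝ v w = {w} + segment ℝ 0 (v - w) := by
  rw [Set.singleton_add, segment_translate_image, add_zero, add_sub_cancel, segment_symm]

theorem volume_sum_segment {ι : Type*} [Fintype ι] [DecidableEq ι] (v w : ι → ι → ℝ) :
    volume (∑ i, segment ℝ (v i) (w i)) =
      ENNReal.ofReal |(Matrix.of fun i => v i - w i).det| := by
  have hvol : (Pi.basisFun ℝ ι).addHaar = volume := by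
    rw [Module.Basis.addHaar_def, Module.Basis.parallelepiped_basisFun,
      addHaarMeasure_eq_volume_pi]
  calc volume (∑ i, segment ℝ (v i) (w i))
      = volume ({∑ i, w i} + parallelepiped fun i => v i - w i) := by
        rw [sum_congr rfl fun i _ => segment_eq_singleton_add (v i) (w i), sum_add_distrib,
          Set.finsetSum_singleton, parallelepiped_eq_sum_segment]
    _ = volume (parallelepiped fun i => v i - w i) := by
        rw [Set.singleton_add, Set.image_add_left, measure_preimage_add]
    _ = ENNReal.ofReal |(Matrix.of fun i => v i - w i).det| := by
        rw [← hvol, Measure.addHaar_parallelepiped, Pi.basisFun_det_apply]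

theorem finrank_vectorSpan_sum_segment_le {ι E : Type*} [AddCommGroup E] [Module ℝ E]
    (I : Finset ι) (v w : ι → E) :
    Module.finrank ℝ (vectorSpan ℝ (∑ i ∈ I, segment ℝ (v i) (w i))) ≤ #I := by
  classical
  have hspan (i : ι) : vectorSpan ℝ (segment ℝ (v i) (w i)) = ℝ ∙ (v i - w i) := by
    rw [← convexHull_pair, vectorSpan_convexHull, vectorSpan_pair, vsub_eq_sub]
  rw [vectorSpan_sum I fun i _ => ⟨v i, left_mem_segment ℝ (v i) (w i)⟩]
  have hiSup : ⨆ i ∈ I, vectorSpan ℝ (segment ℝ (v i) (w i)) =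
      Submodule.span ℝ (I.image fun i => v i - w i : Finset E) := by
    simp only [hspan, coe_image, Set.image_eq_iUnion, Submodule.span_iUnion₂, mem_coe]
  rw [hiSup]
  exact (finrank_span_finset_le_card _).trans card_image_le

theorem mixedVol_segment {n : ℕ} (v w : Fin n → Fin n → ℝ) :
    mixedVol (fun i => segment ℝ (v i) (w i)) = |(Matrix.of fun i => v i - w i).det| := by
  have hproper (I : Finset (Fin n)) (hI : I ≠ univ) :
      volume (∑ i ∈ I, segment ℝ (v i) (w i)) = 0 := by
    refine addHaar_eq_zero_of_vectorSpan_ne_top volume fun htop => ?_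
    have hle := finrank_vectorSpan_sum_segment_le I v w
    rw [htop, finrank_top, Module.finrank_fin_fun] at hle
    exact hI (eq_univ_of_card I (by simpa using le_antisymm (card_le_univ I) (by simpa)))
  rw [mixedVol, sum_eq_single univ (fun I _ hI => by rw [hproper I hI]; simp) (by simp)]
  simp [volume_sum_segment]

theorem abs_det_sub_le_mixedVol {n : ℕ} {V : Fin n → Finset (Fin n → ℝ)}
    {v w : Fin n → Fin n → ℝ} (hv : ∀ i, v i ∈ V i) (hw : ∀ i, w i ∈ V i) :
    |(Matrix.of fun i => v i - w i).det| ≤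
      mixedVol fun i => convexHull ℝ (V i : Set (Fin n → ℝ)) := by
  let W (i : Fin n) : Finset (Fin n → ℝ) := {v i, w i}
  have hWV (i : Fin n) : W i ⊆ V i := insert_subset (hv i) (singleton_subset_iff.2 (hw i))
  calc |(Matrix.of fun i => v i - w i).det|
      = mixedVol fun i => convexHull ℝ (W i : Set (Fin n → ℝ)) := by
        simp only [W, coe_pair, convexHull_pair, mixedVol_segment]
    _ ≤ mixedVol fun i => convexHull ℝ (V i : Set (Fin n → ℝ)) :=
        mixedVol_convexHull_mono hWV fun i => insert_nonempty _ _

end Segments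

section Lattice

variable {n : ℕ}

theorem IsLatticePt.sub {x y : Fin n → ℝ} (hx : IsLatticePt x) (hy : IsLatticePt y) :
    IsLatticePt (x - y) := fun i => by
  obtain ⟨a, ha⟩ := hx i
  obtain ⟨b, hb⟩ := hy i
  exact ⟨a - b, by simp [ha, hb]⟩

theorem one_le_abs_det_of_isLatticePt {u : Fin n → Fin n → ℝ} (hu : ∀ i, IsLatticePt (u i))
    (hdet : (Matrix.of u).det ≠ 0) : 1 ≤ |(Matrix.of u).det| := by
  choose z hz using hu
  have hcast : (Matrix.of u).det = ((Matrix.of z).det : ℤ) := by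
    rw [← eq_intCast (Int.castRingHom ℝ), RingHom.map_det, RingHom.mapMatrix_apply]
    exact congrArg Matrix.det (Matrix.ext hz)
  rw [hcast] at hdet ⊢
  exact_mod_cast Int.one_le_abs (Int.cast_ne_zero.1 hdet)

end Lattice

/-- Bernstein's criterion: MV ≥ 1 iff dim(P_I) ≥ |I| for all nonempty I. -/
theorem one_le_mixedVol_iff_dim_condition {n : ℕ}
    (P : Fin n → Set (Fin n → ℝ)) (hP : ∀ i, IsLatticePolytope (P i)) :
    1 ≤ mixedVol P ↔
      ∀ I : Finset (Fin n), I.Nonempty → I.card ≤ adim (∑ i ∈ I, P i) := by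
  choose V hV hlattice hPV using hP
  obtain rfl : P = fun i => convexHull ℝ (V i : Set (Fin n → ℝ)) := funext hPV
  rw [dim_condition_iff_exists_det_ne_zero hV]
  constructor
  · contrapose!
    intro hdet
    rw [mixedVol_eq_zero_of_forall_det_eq_zero hV hdet]
    exact one_pos
  · rintro ⟨v, w, hv, hw, hdet⟩
    exact (one_le_abs_det_of_isLatticePt
      (fun i => (hlattice i _ (hv i)).sub (hlattice i _ (hw i))) hdet).trans
      (abs_det_sub_le_mixedVol hv hw)
end
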